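/- arXiv:1404.5472 — 7 statements merged into one kernel-verified Lean document; each statement's English description precedes it below -/
import Mathlib

section
/- For every type X there exists a free Steiner loop on X, i.e., a Steiner loop S together with a map ι : X → S such that for every Steiner loop M and every map f : X → M there is a unique multiplication-preserving map h : S → M with h ∘ ι = f. -/
/-!
The free Steiner loop on `X` is built as in universal algebra: take the terms over `X` in the
signature `(mul, e)` and divide by the smallest congruence forcing the Steiner loop identities
(`SteinerTerm.Rel`). A map `f : X → M` evaluates terms in `M`, and evaluation respects the
congruence because `M` satisfies the identities (`SteinerTerm.Rel.eval_eq`), so it descends to the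
quotient. Uniqueness is by induction on terms; a multiplication-preserving map sends `e` to `e`
because `e = e·e` and squares are trivial in `M`.
-/

/-- A Steiner loop: a commutative binary operation with identity `e`,
satisfying `x·x = e` and `x·(x·y) = y` for all `x`, `y`. -/
structure SteinerLoopStruct (S : Type) where
  mul : S → S → S
  e : S
  comm : ∀ x y, mul x y = mul y x
  one_mul : ∀ x, mul e x = x
  mul_self : ∀ x, mul x x = e
  cancel : ∀ x y, mul x (mul x y) = y

/-- Multiplication-preserving maps between Steiner loops. -/
def IsSteinerHom {S M : Type} (LS : SteinerLoopStruct S) (LM : SteinerLoopStruct M)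
    (h : S → M) : Prop :=
  ∀ a b, h (LS.mul a b) = LM.mul (h a) (h b)

/-- `(S, ι)` is a free Steiner loop on `X`: every map from `X` to a Steiner loop
extends uniquely to a multiplication-preserving map on `S`. -/
def IsFreeSteinerLoop {X S : Type} (L : SteinerLoopStruct S) (ι : X → S) : Prop :=
  ∀ (M : Type) (LM : SteinerLoopStruct M) (f : X → M),
    ∃! h : S → M, IsSteinerHom L LM h ∧ h ∘ ι = f

/-- Terms over `X` in the signature of Steiner loops. -/
inductive SteinerTerm (X : Type) : Type
  | var : X → SteinerTerm X
  | one : SteinerTerm X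
  | mul : SteinerTerm X → SteinerTerm X → SteinerTerm X

namespace SteinerTerm

/-- The congruence on terms generated by the Steiner loop identities. -/
inductive Rel {X : Type} : SteinerTerm X → SteinerTerm X → Prop
  | refl (a) : Rel a a
  | symm {a b} : Rel a b → Rel b a
  | trans {a b c} : Rel a b → Rel b c → Rel a c
  | congr {a b c d} : Rel a b → Rel c d → Rel (mul a c) (mul b d)
  | comm (a b) : Rel (mul a b) (mul b a)
  | one_mul (a) : Rel (mul one a) a
  | mul_self (a) : Rel (mul a a) one
  | cancel (a b) : Rel (mul a (mul a b)) b

/-- The congruence `Rel` as a setoid. -/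
def setoid (X : Type) : Setoid (SteinerTerm X) :=
  ⟨Rel, Rel.refl, Rel.symm, Rel.trans⟩

/-- The Steiner loop of terms modulo the congruence `Rel`. -/
def freeLoop (X : Type) : SteinerLoopStruct (Quotient (setoid X)) where
  mul := Quotient.map₂ mul fun _ _ h _ _ h' => Rel.congr h h'
  e := Quotient.mk _ one
  comm := by
    rintro ⟨a⟩ ⟨b⟩
    exact Quotient.sound (Rel.comm a b)
  one_mul := by
    rintro ⟨a⟩
    exact Quotient.sound (Rel.one_mul a)
  mul_self := by
    rintro ⟨a⟩
    exact Quotient.sound (Rel.mul_self a)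
  cancel := by
    rintro ⟨a⟩ ⟨b⟩
    exact Quotient.sound (Rel.cancel a b)

/-- The value of a term in a Steiner loop under an assignment `f` of its variables. -/
def eval {X M : Type} (LM : SteinerLoopStruct M) (f : X → M) : SteinerTerm X → M
  | var x => f x
  | one => LM.e
  | mul a b => LM.mul (eval LM f a) (eval LM f b)

theorem Rel.eval_eq {X M : Type} (LM : SteinerLoopStruct M) (f : X → M) {a b : SteinerTerm X}
    (h : Rel a b) : eval LM f a = eval LM f b := by
  induction h with
  | refl a => rfl
  | symm _ ih => exact ih.symm
  | trans _ _ ih₁ ih₂ => exact ih₁.trans ih₂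
  | congr _ _ ih₁ ih₂ => simp only [eval, ih₁, ih₂]
  | comm a b => exact LM.comm _ _
  | one_mul a => exact LM.one_mul _
  | mul_self a => exact LM.mul_self _
  | cancel a b => exact LM.cancel _ _

end SteinerTerm

theorem IsSteinerHom.map_e {S M : Type} {LS : SteinerLoopStruct S} {LM : SteinerLoopStruct M}
    {h : S → M} (hh : IsSteinerHom LS LM h) : h LS.e = LM.e := by
  rw [← LM.mul_self (h LS.e), ← hh, LS.one_mul]

/-- For every type `X` there exists a free Steiner loop on `X`. -/
theorem exists_free_steiner_loop (X : Type) :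
    ∃ (S : Type) (L : SteinerLoopStruct S) (ι : X → S), IsFreeSteinerLoop L ι := by
  refine ⟨_, SteinerTerm.freeLoop X, fun x => Quotient.mk _ (SteinerTerm.var x), ?_⟩
  intro M LM f
  refine ⟨Quotient.lift (SteinerTerm.eval LM f) fun _ _ h => SteinerTerm.Rel.eval_eq LM f h,
    ⟨?_, rfl⟩, ?_⟩
  · rintro ⟨a⟩ ⟨b⟩
    rfl
  · rintro g ⟨hg, hf⟩
    funext q
    induction q using Quotient.ind with | _ t
    induction t with
    | var x => exact congrFun hf x
    | one => exact hg.map_e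
    | mul a b iha ihb =>
      exact (hg (Quotient.mk _ a) (Quotient.mk _ b)).trans (congrArg₂ LM.mul iha ihb)
end

section
/- Let G be a group, H a subgroup of G, and B a subset of G containing 1 such that every left coset gH contains exactly one element of B, b² = 1 for every b ∈ B, and for all b₁, b₂ ∈ B the elements b₁b₂ and b₂b₁ lie in the same left coset of H. Define b₁ * b₂ to be the unique element b₃ ∈ B with b₁b₂ ∈ b₃H. Then (B, *, 1) is a Steiner loop: * is commutative, 1 * b = b, b * b = 1, and b₁ * (b₁ * b₂) = b₂ for all b₁, b₂ ∈ B. -/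
/-!
Since `B` is a transversal of the left cosets of `H`, an identity `star b₁ b₂ = c` in `B` holds as
soon as `b₁ b₂ ∈ c H`. Each loop axiom thus becomes a coset membership: commutativity is the
hypothesis on `b₁ b₂` and `b₂ b₁`, the unit law is trivial, and the other two laws follow from
`b² = 1`, because `b₁ b₂ ∈ c H` is equivalent to `b₁⁻¹ c ∈ b₂ H` and `b₁⁻¹ = b₁`.
-/

/-- An S-decomposition (Baer triple) `G = BH` induces a Steiner loop
structure on `B`: given a group `G`, a subgroup `H`, and a set `B ∋ 1` of
involutions meeting each left coset of `H` exactly once, such that `b₁b₂` and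
`b₂b₁` always lie in a common left coset, the induced operation
`b₁ * b₂ := the unique b₃ ∈ B with b₁b₂ ∈ b₃H` is commutative, has identity `1`,
and satisfies `b * b = 1` and `b₁ * (b₁ * b₂) = b₂`. -/
theorem baer_triple_gives_steiner_loop {G : Type} [Group G] (H : Subgroup G) (B : Set G)
    (h1 : (1 : G) ∈ B)
    (hcoset : ∀ g : G, ∃! b : G, b ∈ B ∧ g⁻¹ * b ∈ H)
    (hsq : ∀ b ∈ B, b * b = 1)
    (hBB : ∀ b₁ ∈ B, ∀ b₂ ∈ B, (b₁ * b₂)⁻¹ * (b₂ * b₁) ∈ H)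
    (star : B → B → B)
    (hstar : ∀ b₁ b₂ : B, ((star b₁ b₂ : G))⁻¹ * ((b₁ : G) * (b₂ : G)) ∈ H) :
    (∀ b₁ b₂ : B, star b₁ b₂ = star b₂ b₁) ∧
    (∀ b : B, star ⟨1, h1⟩ b = b) ∧
    (∀ b : B, star b b = ⟨1, h1⟩) ∧
    (∀ b₁ b₂ : B, star b₁ (star b₁ b₂) = b₂) := by
  -- Uniqueness of coset representatives: `star b₁ b₂` is the only `c ∈ B` with `b₁ b₂ ∈ c H`.
  have key : ∀ b₁ b₂ c : B, (c : G)⁻¹ * ((b₁ : G) * (b₂ : G)) ∈ H → star b₁ b₂ = c := by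
    intro b₁ b₂ c hc
    refine Subtype.ext ((hcoset ((b₁ : G) * b₂)).unique
      ⟨(star b₁ b₂).2, ?_⟩ ⟨c.2, ?_⟩)
    · simpa [mul_assoc] using H.inv_mem (hstar b₁ b₂)
    · simpa [mul_assoc] using H.inv_mem hc
  refine ⟨fun b₁ b₂ => key _ _ _ ?_, fun b => key _ _ _ ?_, fun b => key _ _ _ ?_,
    fun b₁ b₂ => key _ _ _ ?_⟩
  · have h := H.mul_mem (hstar b₂ b₁) (hBB b₂ b₂.2 b₁ b₁.2)
    rwa [mul_assoc, mul_inv_cancel_left] at h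
  · simp
  · simp [hsq b b.2]
  · -- As `b₁⁻¹ = b₁`, the element `b₂⁻¹ b₁ c` is the inverse of `c⁻¹ b₁ b₂` for `c = star b₁ b₂`.
    have h := H.inv_mem (hstar b₁ b₂)
    have hb : (b₁ : G)⁻¹ = b₁ := inv_eq_of_mul_eq_one_left (hsq b₁ b₁.2)
    simpa [mul_assoc, hb] using h
end

section
/- Let S be a Steiner loop with identity e, let G = Mult(S) be its multiplication group, and let H be the subgroup of G generated by all compositions R_a ∘ R_b ∘ R_{a·b} for a, b ∈ S. Then G = B₀H is an S-decomposition with B₀ = {R_b : b ∈ S}: every left coset gH of H in G contains exactly one element of B₀ (namely R_b where b is determined by the coset), each R_b is an involution with R_e = id, B₀ ∩ H = {id}, and for all b₁, b₂ ∈ S the elements R_{b₁}R_{b₂} and R_{b₂}R_{b₁} lie in the coset R_{b₁·b₂}H. -/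
/-- The translation `R v : y ↦ y·v` of a Steiner loop, as a permutation. -/
def SteinerLoopStruct.R {S : Type} (L : SteinerLoopStruct S) (v : S) : Equiv.Perm S where
  toFun y := L.mul y v
  invFun y := L.mul y v
  left_inv y := by
    show L.mul (L.mul y v) v = y
    rw [L.comm, L.comm y v]; exact L.cancel v y
  right_inv y := by
    show L.mul (L.mul y v) v = y
    rw [L.comm, L.comm y v]; exact L.cancel v y

/-- The multiplication group of a Steiner loop: the subgroup of the permutation
group generated by the translations. -/
def SteinerLoopStruct.Mult {S : Type} (L : SteinerLoopStruct S) : Subgroup (Equiv.Perm S) :=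
  Subgroup.closure (Set.range L.R)

namespace SteinerLoopStruct

variable {S : Type} (L : SteinerLoopStruct S)

theorem R_apply (v y : S) : L.R v y = L.mul y v := rfl

theorem R_apply_e (v : S) : L.R v L.e = v := L.one_mul v

theorem mul_mul_cancel_right (x y : S) : L.mul (L.mul x y) y = x := by
  rw [L.comm, L.comm x y, L.cancel]

theorem R_mul_self (v : S) : L.R v * L.R v = 1 :=
  Equiv.ext fun y => L.mul_mul_cancel_right y v

theorem R_inv (v : S) : (L.R v)⁻¹ = L.R v :=
  inv_eq_of_mul_eq_one_left (L.R_mul_self v)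

theorem R_e : L.R L.e = 1 :=
  Equiv.ext fun y => (L.comm y L.e).trans (L.one_mul y)

/-- The subgroup `H` generated by the permutations `R_a R_b R_{a·b}`. -/
def assocSubgroup : Subgroup (Equiv.Perm S) :=
  Subgroup.closure {σ : Equiv.Perm S | ∃ a b : S, σ = L.R a * L.R b * L.R (L.mul a b)}

theorem gen_mem (a b : S) : L.R a * L.R b * L.R (L.mul a b) ∈ L.assocSubgroup :=
  Subgroup.subset_closure ⟨a, b, rfl⟩

theorem apply_e_of_mem {h : Equiv.Perm S} (hh : h ∈ L.assocSubgroup) : h L.e = L.e := by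
  have hle : L.assocSubgroup ≤ MulAction.stabilizer (Equiv.Perm S) L.e := by
    refine (Subgroup.closure_le _).2 ?_
    rintro _ ⟨a, b, rfl⟩
    change L.mul (L.mul (L.mul L.e (L.mul a b)) b) a = L.e
    rw [L.one_mul, L.mul_mul_cancel_right, L.mul_self]
  exact hle hh

theorem inv_mul_R_mem {g : Equiv.Perm S} (hg : g ∈ L.Mult) :
    g⁻¹ * L.R (g L.e) ∈ L.assocSubgroup := by
  have step (a : S) (g : Equiv.Perm S) (ih : g⁻¹ * L.R (g L.e) ∈ L.assocSubgroup) :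
      (L.R a * g)⁻¹ * L.R ((L.R a * g) L.e) ∈ L.assocSubgroup := by
    have h := mul_mem ih (L.gen_mem (g L.e) a)
    have key : (L.R a * g)⁻¹ * L.R ((L.R a * g) L.e) =
        g⁻¹ * L.R (g L.e) * (L.R (g L.e) * L.R a * L.R (L.mul (g L.e) a)) := by
      rw [Equiv.Perm.mul_apply, R_apply, mul_inv_rev, R_inv]
      simp only [mul_assoc]
      rw [← mul_assoc (L.R (g L.e)) (L.R (g L.e)), R_mul_self, _root_.one_mul]
    rwa [key]
  induction hg using Subgroup.closure_induction_left with
  | one => simp [R_e, one_mem]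
  | mul_left x hx y hy ih =>
    obtain ⟨a, rfl⟩ := hx
    exact step a y ih
  | inv_mul_cancel x hx y hy ih =>
    obtain ⟨a, rfl⟩ := hx
    rw [R_inv]
    exact step a y ih

/-- The generator of `H` at the pair `(b₁·b₂, b₁)` is `R_{b₁·b₂} R_{b₁} R_{b₂}`. -/
theorem R_mul_inv_mul_mem (b₁ b₂ : S) :
    (L.R (L.mul b₁ b₂))⁻¹ * (L.R b₁ * L.R b₂) ∈ L.assocSubgroup := by
  have h := L.gen_mem (L.mul b₁ b₂) b₁
  rwa [L.comm (L.mul b₁ b₂) b₁, L.cancel, mul_assoc, ← L.R_inv (L.mul b₁ b₂)] at h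

end SteinerLoopStruct

/-- For any Steiner loop `S`, with `G = Mult(S)` and
`H = ⟨R_a ∘ R_b ∘ R_{a·b} : a, b ∈ S⟩`, the decomposition `G = B₀H` with
`B₀ = {R_b : b ∈ S}` is an S-decomposition: every left coset of `H` in `G`
contains exactly one `R_b`, each `R_b` is an involution, `R_e = id`,
`B₀ ∩ H = {id}`, and `R_{b₁}R_{b₂}` and `R_{b₂}R_{b₁}` both lie in the coset
`R_{b₁·b₂}H`. -/
theorem steiner_mult_S_decomposition {S : Type} (L : SteinerLoopStruct S)
    (H : Subgroup (Equiv.Perm S))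
    (hH : H = Subgroup.closure
      {σ : Equiv.Perm S | ∃ a b : S, σ = L.R a * L.R b * L.R (L.mul a b)}) :
    (∀ g ∈ L.Mult, ∃! b : S, g⁻¹ * L.R b ∈ H) ∧
    (∀ b : S, L.R b * L.R b = 1) ∧
    L.R L.e = 1 ∧
    (∀ b : S, L.R b ∈ H → L.R b = 1) ∧
    (∀ b₁ b₂ : S,
      (L.R (L.mul b₁ b₂))⁻¹ * (L.R b₁ * L.R b₂) ∈ H ∧
      (L.R (L.mul b₁ b₂))⁻¹ * (L.R b₂ * L.R b₁) ∈ H) := by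
  obtain rfl : H = L.assocSubgroup := hH
  refine ⟨fun g hg => ⟨g L.e, L.inv_mul_R_mem hg, fun b hb => ?_⟩, L.R_mul_self, L.R_e,
    fun b hb => ?_, fun b₁ b₂ => ⟨L.R_mul_inv_mul_mem b₁ b₂, ?_⟩⟩
  · have h := L.apply_e_of_mem hb
    rwa [Equiv.Perm.mul_apply, L.R_apply_e, Equiv.Perm.inv_eq_iff_eq] at h
  · have h := L.apply_e_of_mem hb
    rw [L.R_apply_e] at h
    rw [h, L.R_e]
  · rw [L.comm b₁ b₂]
    exact L.R_mul_inv_mul_mem b₂ b₁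
end

section
/- Let (S, ι) be a free Steiner loop on a set X, with identity e. Then the stabilizer of e in the multiplication group Mult(S) (the inner mapping group of S) is generated by the set {R_v ∘ R_w ∘ R_{v·w} : v, w ∈ S}, and it is a free group (isomorphic to a free group on some set). -/
namespace FreeSteiner

/-! ### Reduced terms -/

/-- Binary terms over `X` with a unit. -/
inductive Tm (X : Type) : Type
  | e : Tm X
  | gen (x : X) : Tm X
  | nd (a b : Tm X) : Tm X

namespace Tm

variable {X : Type}

open Classical in
/-- The unordered node with children `a` and `b`: the children are stored in the order given by
a fixed well-ordering of the terms, so that `J a b = J b a`. -/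
noncomputable def J (a b : Tm X) : Tm X :=
  if WellOrderingRel a b then nd a b else nd b a

/-- The number of nodes of a term, leaves included. -/
def size : Tm X → ℕ
  | e => 1
  | gen _ => 1
  | nd a b => size a + size b + 1

theorem size_J (a b : Tm X) : size (J a b) = size a + size b + 1 := by
  unfold J
  split_ifs
  · rfl
  · simp only [size]
    omega

theorem J_comm (a b : Tm X) : J a b = J b a := by
  unfold J
  rcases trichotomous_of (WellOrderingRel (α := Tm X)) a b with h | h | h
  · rw [if_pos h, if_neg (asymm_of WellOrderingRel h)]
  · rw [h]
  · rw [if_pos h, if_neg (asymm_of WellOrderingRel h)]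

theorem J_inj {a b c d : Tm X} (h : J a b = J c d) : (a = c ∧ b = d) ∨ (a = d ∧ b = c) := by
  unfold J at h
  split_ifs at h <;> simp only [nd.injEq] at h <;> tauto

theorem J_inj_left {a b c : Tm X} (h : J a b = J a c) : b = c := by
  rcases J_inj h with ⟨_, h⟩ | ⟨h1, h2⟩
  · exact h
  · rw [h2, ← h1]

theorem J_ne_e (a b : Tm X) : J a b ≠ e := by
  unfold J; split_ifs <;> simp

theorem J_ne_gen (a b : Tm X) (x : X) : J a b ≠ gen x := by
  unfold J; split_ifs <;> simp

theorem J_ne_left (a b : Tm X) : J a b ≠ a := by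
  intro h
  have := congrArg size h
  rw [size_J] at this
  omega

theorem J_ne_right (a b : Tm X) : J a b ≠ b := by
  rw [J_comm]; exact J_ne_left b a

/-- The pairs of terms whose product is the new node `J a b`, no law of Steiner loops applying at
the root. -/
def Irr (a b : Tm X) : Prop :=
  a ≠ e ∧ b ≠ e ∧ a ≠ b ∧ (∀ c, b ≠ J a c) ∧ (∀ c, a ≠ J b c)

theorem Irr.symm {a b : Tm X} (h : Irr a b) : Irr b a :=
  ⟨h.2.1, h.1, h.2.2.1.symm, h.2.2.2.2, h.2.2.2.1⟩

/-- The reduced terms, which are the elements of the free Steiner loop. -/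
inductive Normal : Tm X → Prop
  | e : Normal e
  | gen (x : X) : Normal (gen x)
  | J (a b : Tm X) : Normal a → Normal b → Irr a b → Normal (J a b)

theorem Normal.inv {a b : Tm X} (h : Normal (Tm.J a b)) : Normal a ∧ Normal b ∧ Irr a b := by
  generalize ht : Tm.J a b = t at h
  cases h with
  | e => exact absurd ht (J_ne_e a b)
  | gen x => exact absurd ht (J_ne_gen a b x)
  | J c d hc hd hcd =>
    rcases J_inj ht with ⟨rfl, rfl⟩ | ⟨rfl, rfl⟩
    · exact ⟨hc, hd, hcd⟩
    · exact ⟨hd, hc, hcd.symm⟩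

open Classical in
/-- The product of terms, computed by applying the laws of Steiner loops once at the root. -/
noncomputable def mul (a b : Tm X) : Tm X :=
  if a = e then b else if b = e then a else if a = b then e
  else if h : ∃ c, b = J a c then h.choose
  else if h : ∃ c, a = J b c then h.choose
  else J a b

theorem e_mul (b : Tm X) : mul e b = b := by simp [mul]

theorem mul_e (a : Tm X) : mul a e = a := by
  by_cases h : a = e <;> simp [mul, h]

theorem mul_self (a : Tm X) : mul a a = e := by
  by_cases h : a = e <;> simp [mul, h]

theorem mul_J {a c : Tm X} (ha : a ≠ e) : mul a (J a c) = c := by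
  have h : ∃ d, J a c = J a d := ⟨c, rfl⟩
  rw [mul, if_neg ha, if_neg (J_ne_e a c), if_neg (J_ne_left a c).symm, dif_pos h]
  exact (J_inj_left h.choose_spec).symm

theorem J_mul {b c : Tm X} (hb : b ≠ e) : mul (J b c) b = c := by
  have h : ∃ d, J b c = J b d := ⟨c, rfl⟩
  have h' : ¬ ∃ d, b = J (J b c) d := by
    rintro ⟨d, hd⟩
    have := congrArg size hd
    rw [size_J, size_J] at this
    omega
  rw [mul, if_neg (J_ne_e b c), if_neg hb, if_neg (J_ne_left b c), dif_neg h', dif_pos h]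
  exact (J_inj_left h.choose_spec).symm

theorem mul_irr {a b : Tm X} (h : Irr a b) : mul a b = J a b := by
  obtain ⟨h1, h2, h3, h4, h5⟩ := h
  rw [mul, if_neg h1, if_neg h2, if_neg h3, dif_neg (by simpa using h4),
    dif_neg (by simpa using h5)]

/-- The cases in the computation of a product. -/
theorem mul_cases (a b : Tm X) : a = e ∨ b = e ∨ a = b ∨ (a ≠ e ∧ ∃ c, b = J a c) ∨
    (b ≠ e ∧ ∃ c, a = J b c) ∨ Irr a b := by
  by_cases h1 : a = e
  · tauto
  by_cases h2 : b = e
  · tauto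
  by_cases h3 : a = b
  · tauto
  by_cases h4 : ∃ c, b = J a c
  · tauto
  by_cases h5 : ∃ c, a = J b c
  · tauto
  push Not at h4 h5
  exact Or.inr (Or.inr (Or.inr (Or.inr (Or.inr ⟨h1, h2, h3, h4, h5⟩))))

theorem mul_comm' (a b : Tm X) : mul a b = mul b a := by
  rcases mul_cases a b with rfl | rfl | rfl | ⟨ha, c, rfl⟩ | ⟨hb, c, rfl⟩ | h
  · rw [e_mul, mul_e]
  · rw [e_mul, mul_e]
  · rfl
  · rw [mul_J ha, J_mul ha]
  · rw [mul_J hb, J_mul hb]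
  · rw [mul_irr h, mul_irr h.symm, J_comm]

theorem mul_cancel' {a b : Tm X} (hna : Normal a) (hnb : Normal b) : mul a (mul a b) = b := by
  rcases mul_cases a b with rfl | rfl | rfl | ⟨ha, c, rfl⟩ | ⟨hb, c, rfl⟩ | h
  · rw [e_mul, e_mul]
  · rw [mul_e, mul_self]
  · rw [mul_self, mul_e]
  · rw [mul_J ha, mul_irr hnb.inv.2.2]
  · rw [J_mul hb, J_comm, J_mul hna.inv.2.2.2.1]
  · rw [mul_irr h, mul_J h.1]

theorem Normal.mul {a b : Tm X} (hna : Normal a) (hnb : Normal b) : Normal (mul a b) := by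
  rcases mul_cases a b with rfl | rfl | rfl | ⟨ha, c, rfl⟩ | ⟨hb, c, rfl⟩ | h
  · rwa [e_mul]
  · rwa [mul_e]
  · rw [mul_self]; exact Normal.e
  · rw [mul_J ha]; exact hnb.inv.2.1
  · rw [J_mul hb]; exact hna.inv.2.1
  · rw [mul_irr h]; exact Normal.J _ _ hna hnb h

/-- The value of a term in a Steiner loop. -/
def eval {M : Type} (L : SteinerLoopStruct M) (f : X → M) : Tm X → M
  | e => L.e
  | gen x => f x
  | nd a b => L.mul (eval L f a) (eval L f b)

theorem eval_J {M : Type} (L : SteinerLoopStruct M) (f : X → M) (a b : Tm X) :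
    eval L f (J a b) = L.mul (eval L f a) (eval L f b) := by
  unfold J
  split_ifs
  · rfl
  · exact L.comm _ _

theorem eval_mul {M : Type} (L : SteinerLoopStruct M) (f : X → M) (a b : Tm X) :
    eval L f (mul a b) = L.mul (eval L f a) (eval L f b) := by
  rcases mul_cases a b with rfl | rfl | rfl | ⟨ha, c, rfl⟩ | ⟨hb, c, rfl⟩ | h
  · rw [e_mul]; exact (L.one_mul _).symm
  · rw [mul_e, L.comm]; exact (L.one_mul _).symm
  · rw [mul_self, L.mul_self]; rfl
  · rw [mul_J ha, eval_J, L.cancel]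
  · rw [J_mul hb, eval_J, L.comm, L.cancel]
  · rw [mul_irr h, eval_J]

/-- The Steiner loop of reduced terms. -/
noncomputable def loop (X : Type) : SteinerLoopStruct {t : Tm X // Normal t} where
  mul a b := ⟨mul a.1 b.1, a.2.mul b.2⟩
  e := ⟨e, Normal.e⟩
  comm _ _ := Subtype.ext (mul_comm' _ _)
  one_mul _ := Subtype.ext (e_mul _)
  mul_self _ := Subtype.ext (mul_self _)
  cancel a b := Subtype.ext (mul_cancel' a.2 b.2)

/-! ### Absence of cancellation -/

/-- Multiplying a node with two children larger than `N` successively by nontrivial terms of size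
at most `N`, no two consecutive ones equal, never cancels: each factor becomes a child of a new
root, and the only factor of size at most `N` that could cancel is the one just added. -/
theorem growth (N : ℕ) (a b : Tm X) (ha : N < size a) (hb : N < size b) (l : List (Tm X))
    (hs : ∀ v ∈ l, size v ≤ N) (he : ∀ v ∈ l, v ≠ e) (hc : l.IsChain (· ≠ ·)) :
    ∃ p q, l.foldr (fun v y => mul y v) (J a b) = J p q ∧ N < size p ∧
      size (J a b) + l.length ≤ size (J p q) ∧
      ∀ v, size v ≤ N → (v :: l).IsChain (· ≠ ·) → v ≠ q := by
  induction l with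
  | nil =>
    refine ⟨a, b, rfl, ha, le_rfl, fun v hv _ => ?_⟩
    rintro rfl
    omega
  | cons w l ih =>
    obtain ⟨p, q, h1, h2, h3, h4⟩ := ih (fun v hv => hs v (List.mem_cons_of_mem _ hv))
      (fun v hv => he v (List.mem_cons_of_mem _ hv)) hc.of_cons
    have hw : size w ≤ N := hs w List.mem_cons_self
    have hwq : w ≠ q := h4 w hw hc
    have hwp : w ≠ p := by rintro rfl; omega
    have hirr : Irr (J p q) w := by
      refine ⟨J_ne_e _ _, he w List.mem_cons_self, ?_, ?_, ?_⟩
      · intro h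
        have := congrArg size h
        rw [size_J] at this
        omega
      · intro c h
        have := congrArg size h
        rw [size_J, size_J] at this
        omega
      · intro c h
        rcases J_inj h with h | h
        · exact hwp h.1.symm
        · exact hwq h.2.symm
    refine ⟨J p q, w, ?_, ?_, ?_, ?_⟩
    · rw [List.foldr_cons, h1, mul_irr hirr]
    · rw [size_J]; omega
    · rw [size_J (J p q), List.length_cons]; omega
    · intro v _ hv
      exact (List.isChain_cons_cons.1 hv).1

/-- Left multiplication by `x` and then by `z` does not cancel on a reduced composite term not of
the form `xc`. -/
theorem step {x z : X} (hxz : x ≠ z) {t : Tm X} (ht : Normal t) (h1 : t ≠ e)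
    (h2 : ∀ g, t ≠ gen g) (h3 : ∀ c, t ≠ J (gen x) c) :
    Normal (J (gen x) t) ∧ Normal (J (gen z) (J (gen x) t)) := by
  have hu : Normal (J (gen x) t) :=
    Normal.J _ _ (Normal.gen x) ht
      ⟨by simp, h1, (h2 x).symm, h3, fun c => (J_ne_gen t c x).symm⟩
  refine ⟨hu, Normal.J _ _ (Normal.gen z) hu
    ⟨by simp, J_ne_e _ _, (J_ne_gen _ _ z).symm, ?_, fun c => (J_ne_gen _ c z).symm⟩⟩
  intro c h
  rcases J_inj h with h | h
  · exact hxz (by simpa using h.1)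
  · exact h2 z h.2

/-- From three generators `x`, `y`, `z`, iterating `t ↦ z(xt)` from `yz` gives reduced terms of
unbounded size. -/
theorem exists_large {x y z : X} (hxy : x ≠ y) (hyz : y ≠ z) (hxz : x ≠ z) (N : ℕ) :
    ∃ t : Tm X, Normal t ∧ N < size t ∧ t ≠ e ∧ (∀ g, t ≠ gen g) ∧ ∀ c, t ≠ J (gen x) c := by
  induction N with
  | zero =>
    refine ⟨J (gen y) (gen z), Normal.J _ _ (Normal.gen y) (Normal.gen z)
      ⟨by simp, by simp, by simpa using hyz, fun c => (J_ne_gen _ c z).symm,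
        fun c => (J_ne_gen _ c y).symm⟩, by rw [size_J]; omega, J_ne_e _ _, J_ne_gen _ _, ?_⟩
    intro c h
    rcases J_inj h with h | h
    · exact hxy (by simpa using h.1.symm)
    · exact hxz (by simpa using h.2.symm)
  | succ N ih =>
    obtain ⟨t, h0, hN, h1, h2, h3⟩ := ih
    refine ⟨_, (step hxz h0 h1 h2 h3).2, by rw [size_J, size_J]; omega, J_ne_e _ _,
      J_ne_gen _ _, ?_⟩
    intro c h
    rcases J_inj h with h | h
    · exact hxz (by simpa using h.1.symm)
    · exact J_ne_gen _ _ _ h.2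

/-- A node whose two children are both larger than `N`, as needed in `growth`. -/
theorem exists_start {x y z : X} (hxy : x ≠ y) (hyz : y ≠ z) (hxz : x ≠ z) (N : ℕ) :
    ∃ a b : Tm X, Normal (J a b) ∧ N < size a ∧ N < size b := by
  obtain ⟨t, h0, hN, h1, h2, h3⟩ := exists_large hxy hyz hxz N
  have hs : size (J (gen z) (J (gen x) t)) > size t := by rw [size_J, size_J]; omega
  refine ⟨t, J (gen z) (J (gen x) t), Normal.J _ _ h0 (step hxz h0 h1 h2 h3).2
    ⟨h1, J_ne_e _ _, ?_, ?_, ?_⟩, hN, by omega⟩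
  · intro h
    rw [← h] at hs
    omega
  · intro c h
    rcases J_inj h with h | h
    · exact h2 z h.1.symm
    · exact J_ne_right _ _ h.2
  · intro c h
    have := congrArg size h
    rw [size_J] at this
    omega

end Tm

/-- No nonempty word in the nontrivial elements without equal neighbours acts trivially by
translations; equivalently, the multiplication group is the free product of the groups of order
two generated by the translations by nontrivial elements. -/
def Faithful {S : Type} (L : SteinerLoopStruct S) : Prop :=
  ∀ l : List S, (∀ v ∈ l, v ≠ L.e) → l.IsChain (· ≠ ·) → l ≠ [] →
    ∃ y, l.foldr (fun v y => L.mul y v) y ≠ y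

theorem faithful_loop {X : Type} {x y z : X} (hxy : x ≠ y) (hyz : y ≠ z) (hxz : x ≠ z) :
    Faithful (Tm.loop X) := by
  intro l he hc hl
  obtain ⟨N, hN⟩ : ∃ N, ∀ v ∈ l.map Subtype.val, Tm.size v ≤ N :=
    ⟨((l.map Subtype.val).map Tm.size).sum, fun v hv =>
      List.le_sum_of_mem (List.mem_map_of_mem hv)⟩
  obtain ⟨a, b, hab, ha, hb⟩ := Tm.exists_start hxy hyz hxz N
  refine ⟨⟨Tm.J a b, hab⟩, fun h => ?_⟩
  have key : ∀ (l : List {t : Tm X // t.Normal}) (y : {t : Tm X // t.Normal}),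
      (l.foldr (fun v y => (Tm.loop X).mul y v) y).1 =
        (l.map Subtype.val).foldr (fun v y => Tm.mul y v) y.1 := by
    intro l y
    induction l with
    | nil => rfl
    | cons w l ih =>
      rw [List.foldr_cons, List.map_cons, List.foldr_cons, ← ih]
      rfl
  obtain ⟨p, q, h1, -, h3, -⟩ := Tm.growth N a b ha hb (l.map Subtype.val) hN
    (by
      intro v hv
      obtain ⟨w, hw, rfl⟩ := List.mem_map.1 hv
      exact fun h => he w hw (Subtype.ext h))
    ((List.isChain_map _).2 (hc.imp fun a b hab h => hab (Subtype.ext h)))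
  have h4 := key l ⟨Tm.J a b, hab⟩
  rw [h, h1] at h4
  rw [← h4, List.length_map] at h3
  have := List.length_pos_iff.2 hl
  change Tm.size (Tm.J a b) + _ ≤ Tm.size (Tm.J a b) at h3
  omega

theorem hom_e {S M : Type} {L : SteinerLoopStruct S} {K : SteinerLoopStruct M} {h : S → M}
    (hh : IsSteinerHom L K h) : h L.e = K.e := by
  rw [← L.mul_self L.e, hh, K.mul_self]

/-- A Steiner loop is faithful as soon as it is isomorphic to a faithful one. -/
theorem Faithful.transport {S M : Type} {L : SteinerLoopStruct S} {K : SteinerLoopStruct M}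
    (hK : Faithful K) (h : S → M) (g : M → S) (hh : IsSteinerHom L K h)
    (hgh : ∀ s, g (h s) = s) (hhg : ∀ m, h (g m) = m) : Faithful L := by
  intro l he hc hl
  have hinj : Function.Injective h := Function.LeftInverse.injective hgh
  obtain ⟨y, hy⟩ := hK (l.map h)
    (by
      intro v hv
      obtain ⟨w, hw, rfl⟩ := List.mem_map.1 hv
      exact fun h0 => he w hw (hinj (h0.trans (hom_e hh).symm)))
    ((List.isChain_map _).2 (hc.imp fun a b hab h0 => hab (hinj h0)))
    (by simpa using hl)
  refine ⟨g y, fun h0 => hy ?_⟩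
  have key : ∀ (l : List S) (s : S), h (l.foldr (fun v y => L.mul y v) s) =
      (l.map h).foldr (fun v y => K.mul y v) (h s) := by
    intro l s
    induction l with
    | nil => rfl
    | cons w l ih => rw [List.foldr_cons, List.map_cons, List.foldr_cons, ← ih, hh]
  have := key l (g y)
  rw [h0, hhg] at this
  exact this.symm

/-! ### The free loop as the loop of reduced terms -/

section Free

variable {X S : Type} {L : SteinerLoopStruct S} {ι : X → S}

/-- A free Steiner loop is isomorphic to the loop of reduced terms. -/
theorem exists_iso (hfree : IsFreeSteinerLoop L ι) :
    ∃ h : S → {t : Tm X // t.Normal}, IsSteinerHom L (Tm.loop X) h ∧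
      (∀ s, Tm.eval L ι (h s).1 = s) ∧ (∀ t, h (Tm.eval L ι t.1) = t) := by
  obtain ⟨h, ⟨hh, hι⟩, -⟩ := hfree _ (Tm.loop X) (fun x => ⟨Tm.gen x, Tm.Normal.gen x⟩)
  refine ⟨h, hh, ?_, ?_⟩
  · have h1 : IsSteinerHom L L (fun s => Tm.eval L ι (h s).1) ∧
        (fun s => Tm.eval L ι (h s).1) ∘ ι = ι := by
      refine ⟨fun a b => ?_, ?_⟩
      · change Tm.eval L ι (h (L.mul a b)).1 = _
        rw [hh]
        exact Tm.eval_mul _ _ _ _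
      · funext x
        have := congrFun hι x
        simp only [Function.comp_apply] at this ⊢
        rw [this]
        rfl
    exact congrFun ((hfree S L ι).unique h1 ⟨fun a b => rfl, rfl⟩)
  · rintro ⟨t, ht⟩
    induction ht with
    | e => exact hom_e hh
    | gen x => exact congrFun hι x
    | J a b ha hb hab iha ihb =>
      simp only at iha ihb ⊢
      rw [Tm.eval_J, hh, iha, ihb]
      exact Subtype.ext (Tm.mul_irr hab)

theorem faithful_of_free (hfree : IsFreeSteinerLoop L ι) {x y z : X} (hxy : x ≠ y) (hyz : y ≠ z)
    (hxz : x ≠ z) : Faithful L := by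
  obtain ⟨h, hh, h1, h2⟩ := exists_iso hfree
  exact (faithful_loop hxy hyz hxz).transport h (fun t => Tm.eval L ι t.1) hh h1 h2

end Free

/-! ### Translations and the stabilizer of the identity -/

section Group

variable {S : Type} (L : SteinerLoopStruct S)

theorem R_apply (v y : S) : L.R v y = L.mul y v := rfl

theorem mul_one' (v : S) : L.mul v L.e = v := by rw [L.comm, L.one_mul]

theorem cancel_right (v w : S) : L.mul (L.mul v w) w = v := by
  rw [L.comm, L.comm v w, L.cancel]

theorem cancel_mid (v w : S) : L.mul (L.mul v w) v = w := by
  rw [L.comm, L.cancel]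

theorem R_mul_R (v : S) : L.R v * L.R v = 1 := by
  ext y
  exact cancel_right L y v

theorem R_e : L.R L.e = 1 := by
  ext y
  exact mul_one' L y

/-- Schreier's argument with the transversal `v ↦ R_v` of the stabilizer of `e`. -/
theorem stabilizer_eq : L.Mult ⊓ MulAction.stabilizer (Equiv.Perm S) L.e =
      Subgroup.closure
        {σ : Equiv.Perm S | ∃ v w : S, σ = L.R v * L.R w * L.R (L.mul v w)} := by
  apply le_antisymm
  · rintro g ⟨hg, hs⟩
    have step : ∀ (v : S) (g : Equiv.Perm S), L.R (g L.e) * g ∈ Subgroup.closure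
        {σ : Equiv.Perm S | ∃ v w : S, σ = L.R v * L.R w * L.R (L.mul v w)} →
        L.R ((L.R v * g) L.e) * (L.R v * g) ∈ Subgroup.closure
        {σ : Equiv.Perm S | ∃ v w : S, σ = L.R v * L.R w * L.R (L.mul v w)} := by
      intro v g ih
      have h1 : L.R ((L.R v * g) L.e) * (L.R v * g) =
          (L.R ((L.R v * g) L.e) * L.R v * L.R (L.mul ((L.R v * g) L.e) v)) *
            (L.R (g L.e) * g) := by
        rw [Equiv.Perm.mul_apply, R_apply, cancel_right]
        simp only [mul_assoc]
        rw [← mul_assoc (L.R (g L.e)) (L.R (g L.e)) g, R_mul_R, one_mul]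
      rw [h1]
      exact mul_mem (Subgroup.subset_closure ⟨_, _, rfl⟩) ih
    have key : L.R (g L.e) * g ∈ Subgroup.closure
        {σ : Equiv.Perm S | ∃ v w : S, σ = L.R v * L.R w * L.R (L.mul v w)} := by
      clear hs
      induction hg using Subgroup.closure_induction_left with
      | one => rw [Equiv.Perm.one_apply, R_e, mul_one]; exact one_mem _
      | mul_left x hx y hy ih =>
        obtain ⟨v, rfl⟩ := hx
        exact step v y ih
      | inv_mul_cancel x hx y hy ih =>
        obtain ⟨v, rfl⟩ := hx
        rw [inv_eq_of_mul_eq_one_right (R_mul_R L v)]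
        exact step v y ih
    have hs' : g L.e = L.e := hs
    rwa [hs', R_e, one_mul] at key
  · rw [Subgroup.closure_le]
    rintro _ ⟨v, w, rfl⟩
    have hR : ∀ v, L.R v ∈ L.Mult := fun v => Subgroup.subset_closure ⟨v, rfl⟩
    refine ⟨mul_mem (mul_mem (hR v) (hR w)) (hR _), ?_⟩
    change L.mul (L.mul (L.mul L.e (L.mul v w)) w) v = L.e
    rw [L.one_mul, cancel_right, L.mul_self]

/-- In a Steiner loop all of whose elements lie in `{e, a, b, ab}`, the inner mappings are
trivial. -/
theorem small (a b : S) (hS : ∀ s, s = L.e ∨ s = a ∨ s = b ∨ s = L.mul a b) (v w : S) :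
    L.R v * L.R w * L.R (L.mul v w) = 1 := by
  -- `g` parametrizes the loop by the Klein four-group `Bool × Bool`.
  let g : Bool → Bool → S := fun i j => L.mul (if i then a else L.e) (if j then b else L.e)
  have hg : ∀ s, ∃ i j, s = g i j := by
    intro s
    rcases hS s with h | h | h | h
    · exact ⟨false, false, by simp [g, h, L.one_mul]⟩
    · exact ⟨true, false, by simp [g, h, mul_one']⟩
    · exact ⟨false, true, by simp [g, h, L.one_mul]⟩
    · exact ⟨true, true, by simp [g, h]⟩
  have hm : ∀ i j k l, L.mul (g i j) (g k l) = g (xor i k) (xor j l) := by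
    have h1 : L.mul b a = L.mul a b := L.comm b a
    have h2 : L.mul b (L.mul a b) = a := by rw [L.comm, cancel_right]
    rintro (_ | _) (_ | _) (_ | _) (_ | _) <;>
      simp [g, L.one_mul, mul_one', L.mul_self, L.cancel, cancel_right, cancel_mid, h1, h2]
  ext y
  obtain ⟨i, j, rfl⟩ := hg y
  obtain ⟨k, l, rfl⟩ := hg v
  obtain ⟨m, n, rfl⟩ := hg w
  simp only [Equiv.Perm.mul_apply, R_apply, hm, Equiv.Perm.one_apply]
  congr 1
  · cases i <;> cases k <;> cases m <;> rfl
  · cases j <;> cases l <;> cases n <;> rfl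

/-! ### The free product of groups of order two -/

/-- The group of order two. -/
abbrev C2 : Type := Multiplicative (ZMod 2)

/-- The homomorphism from the group of order two given by an element with square `1`. -/
def ofInvolution {N : Type} [Group N] (n : N) (hn : n * n = 1) : C2 →* N where
  toFun a := if a = 1 then 1 else n
  map_one' := if_pos rfl
  map_mul' a b := by
    have h : ∀ a b : C2, a ≠ 1 → b ≠ 1 → a * b = 1 := by decide
    by_cases ha : a = 1
    · simp [ha]
    by_cases hb : b = 1
    · simp [hb]
    rw [if_neg ha, if_neg hb, if_pos (h a b ha hb), hn]

/-- The free product of groups of order two, one for each nontrivial element of the loop. -/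
abbrev G : Type := Monoid.CoprodI (fun _ : {v : S // v ≠ L.e} => C2)

open Classical in
/-- The generator of `G L` attached to an element of the loop, with `e` giving `1`. -/
noncomputable def rho (v : S) : G L :=
  if h : v = L.e then 1
  else Monoid.CoprodI.of (i := ⟨v, h⟩) (M := fun _ : {v : S // v ≠ L.e} => C2)
    (Multiplicative.ofAdd 1)

/-- The homomorphism on the free product given by a family of involutions. -/
def liftInv {N : Type} [Group N] (n : S → N) (hn : ∀ v, n v * n v = 1) : G L →* N :=
  Monoid.CoprodI.lift fun v => ofInvolution (n v.1) (hn v.1)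

theorem liftInv_rho {N : Type} [Group N] (n : S → N) (hn : ∀ v, n v * n v = 1)
    (he : n L.e = 1) (v : S) : liftInv L n hn (rho L v) = n v := by
  unfold rho
  split_ifs with h
  · rw [map_one, h, he]
  · rw [liftInv, Monoid.CoprodI.lift_of]
    have h1 : (Multiplicative.ofAdd 1 : C2) ≠ 1 := by decide
    simp [ofInvolution, h1]

theorem prod_R_apply (l : List S) (y : S) :
    (l.map L.R).prod y = l.foldr (fun v y => L.mul y v) y := by
  induction l with
  | nil => rfl
  | cons w l ih =>
    rw [List.map_cons, List.prod_cons, Equiv.Perm.mul_apply, ih, List.foldr_cons, R_apply]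

/-- The multiplication group of a faithful Steiner loop is a free product of groups of order
two. -/
theorem liftInv_R_injective (hL : Faithful L) :
    Function.Injective (liftInv L L.R (R_mul_R L)) := by
  classical
  rw [injective_iff_map_eq_one]
  intro g hg
  obtain ⟨w, rfl⟩ :=
    (Monoid.CoprodI.Word.equiv (M := fun _ : {v : S // v ≠ L.e} => C2)).symm.surjective g
  change liftInv L L.R (R_mul_R L) w.prod = 1 at hg
  have h1 : liftInv L L.R (R_mul_R L) w.prod =
      ((w.toList.map fun p => p.1.1).map L.R).prod := by
    rw [Monoid.CoprodI.Word.prod, map_list_prod, List.map_map, List.map_map]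
    congr 1
    apply List.map_congr_left
    intro p hp
    rw [Function.comp_apply, liftInv, Monoid.CoprodI.lift_of]
    exact if_neg (w.ne_one p hp)
  by_cases hnil : w.toList = []
  · change w.prod = 1
    rw [Monoid.CoprodI.Word.prod, hnil]
    rfl
  · exfalso
    obtain ⟨y, hy⟩ := hL (w.toList.map fun p => p.1.1)
      (by
        intro v hv
        obtain ⟨p, -, rfl⟩ := List.mem_map.1 hv
        exact p.1.2)
      ((List.isChain_map _).2 (w.chain_ne.imp fun a b hab h => hab (Subtype.ext h)))
      (by simpa using hnil)
    rw [← prod_R_apply, ← h1, hg] at hy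
    exact hy rfl

/-! ### The fundamental group of the complete graph -/

/-- The edges of the complete graph on `S` outside the star of `e`, each with an orientation; they
index a basis of the inner mapping group when there are at least three generators. -/
abbrev Edge : Type :=
  {p : S × S // p.1 ≠ L.e ∧ p.2 ≠ L.e ∧ WellOrderingRel p.1 p.2}

open Classical in
/-- The class of the oriented edge between `v` and `w` in the fundamental group of the complete graph
on `S`, taken relative to the spanning tree formed by the star of `e`. -/
noncomputable def edge (v w : S) : FreeGroup (Edge L) :=
  if h : v ≠ L.e ∧ w ≠ L.e ∧ WellOrderingRel v w then FreeGroup.of ⟨(v, w), h⟩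
  else if h : w ≠ L.e ∧ v ≠ L.e ∧ WellOrderingRel w v then (FreeGroup.of ⟨(w, v), h⟩)⁻¹
  else 1

theorem edge_mul_edge (v w : S) : edge L v w * edge L w v = 1 := by
  unfold edge
  by_cases h : v ≠ L.e ∧ w ≠ L.e ∧ WellOrderingRel v w
  · have h' : ¬ (w ≠ L.e ∧ v ≠ L.e ∧ WellOrderingRel w v) :=
      fun h' => asymm_of WellOrderingRel h.2.2 h'.2.2
    rw [dif_pos h, dif_neg h', dif_pos h, mul_inv_cancel]
  · by_cases h' : w ≠ L.e ∧ v ≠ L.e ∧ WellOrderingRel w v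
    · rw [dif_neg h, dif_pos h', dif_pos h', inv_mul_cancel]
    · simp only [dif_neg h, dif_neg h', mul_one]

theorem edge_e_left (v : S) : edge L L.e v = 1 := by simp [edge]

theorem edge_e_right (v : S) : edge L v L.e = 1 := by simp [edge]

theorem edge_self (v : S) : edge L v v = 1 := by
  have : ¬ WellOrderingRel v v := irrefl_of WellOrderingRel v
  simp [edge, this]

/-- The translation by `v`, lifted to `S × FreeGroup (Edge L)` so that the second component
records the edges travelled in the complete graph on `S`. -/
noncomputable def lifted (v : S) : Equiv.Perm (S × FreeGroup (Edge L)) :=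
  Function.Involutive.toPerm (fun p => (L.mul p.1 v, edge L (L.mul p.1 v) p.1 * p.2)) (by
    rintro ⟨y, g⟩
    simp only [cancel_right]
    rw [← mul_assoc, edge_mul_edge, one_mul])

theorem lifted_apply (v y : S) (g : FreeGroup (Edge L)) :
    lifted L v (y, g) = (L.mul y v, edge L (L.mul y v) y * g) := rfl

theorem lifted_mul_lifted (v : S) : lifted L v * lifted L v = 1 := by
  ext1 p
  exact (lifted L v).left_inv p

theorem lifted_e : lifted L L.e = 1 := by
  ext1 ⟨y, g⟩
  rw [lifted_apply, mul_one', edge_self, one_mul]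
  rfl

/-- The homomorphism sending the edge from `v` to `w` to the word of the triangle through `e`, `w`,
`v`. -/
noncomputable def toG : FreeGroup (Edge L) →* G L :=
  FreeGroup.lift fun p => rho L p.1.1 * rho L (L.mul p.1.1 p.1.2) * rho L p.1.2

/-- Lifted translations recover an element of the free group from its image in `G L`. -/
theorem lifted_toG (x g : FreeGroup (Edge L)) :
    liftInv L (lifted L) (lifted_mul_lifted L) (toG L x) (L.e, g) = (L.e, x * g) := by
  have hof : ∀ p : Edge L, ∀ g, liftInv L (lifted L) (lifted_mul_lifted L)
      (toG L (FreeGroup.of p)) (L.e, g) = (L.e, FreeGroup.of p * g) := by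
    rintro ⟨⟨v, w⟩, h⟩ g
    simp only [toG, FreeGroup.lift_apply_of, map_mul, liftInv_rho L _ _ (lifted_e L),
      Equiv.Perm.mul_apply, lifted_apply]
    have h1 : L.mul w (L.mul v w) = v := by rw [L.comm, cancel_right]
    simp only [L.one_mul, h1, L.mul_self, edge_e_left, edge_e_right, one_mul]
    rw [edge, dif_pos h]
  induction x using FreeGroup.induction_on generalizing g with
  | C1 => simp
  | of p => exact hof p g
  | inv_of p _ =>
    have := hof p ((FreeGroup.of p)⁻¹ * g)
    rw [mul_inv_cancel_left] at this
    rw [map_inv, map_inv, Equiv.Perm.inv_eq_iff_eq, this]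
  | mul x y hx hy => rw [map_mul, map_mul, Equiv.Perm.mul_apply, hy, hx, mul_assoc]

theorem toG_injective : Function.Injective (toG L) := by
  intro x y h
  have hx := lifted_toG L x 1
  rw [h, lifted_toG] at hx
  simpa using (congrArg Prod.snd hx).symm

/-- The homomorphism from the free group on the edges to the permutations of `S`. -/
noncomputable def toPerm : FreeGroup (Edge L) →* Equiv.Perm S :=
  (liftInv L L.R (R_mul_R L)).comp (toG L)

theorem toPerm_of (p : Edge L) :
    toPerm L (FreeGroup.of p) = L.R p.1.1 * L.R (L.mul p.1.1 p.1.2) * L.R p.1.2 := by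
  simp only [toPerm, toG, MonoidHom.comp_apply, FreeGroup.lift_apply_of, map_mul,
    liftInv_rho L _ _ (R_e L)]

theorem toPerm_edge (v w : S) :
    toPerm L (edge L v w) = L.R v * L.R (L.mul v w) * L.R w := by
  have hinv : ∀ v, (L.R v)⁻¹ = L.R v := fun v => inv_eq_of_mul_eq_one_right (R_mul_R L v)
  by_cases hv : v = L.e
  · rw [hv, edge_e_left, map_one, L.one_mul, R_e, one_mul, R_mul_R]
  by_cases hw : w = L.e
  · rw [hw, edge_e_right, map_one, mul_one', R_e, mul_one, R_mul_R]
  rcases trichotomous_of (WellOrderingRel (α := S)) v w with h | rfl | h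
  · rw [edge, dif_pos ⟨hv, hw, h⟩, toPerm_of]
  · rw [edge_self, map_one, L.mul_self, R_e, mul_one, R_mul_R]
  · rw [edge, dif_neg fun h' => asymm_of WellOrderingRel h h'.2.2, dif_pos ⟨hw, hv, h⟩, map_inv,
      toPerm_of, mul_inv_rev, mul_inv_rev, hinv, hinv, hinv, L.comm w v, mul_assoc]

theorem range_toPerm : (toPerm L).range = Subgroup.closure
    {σ : Equiv.Perm S | ∃ v w : S, σ = L.R v * L.R w * L.R (L.mul v w)} := by
  apply le_antisymm
  · rw [toPerm, MonoidHom.range_eq_map, ← FreeGroup.closure_range_of, MonoidHom.map_closure,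
      Subgroup.closure_le]
    rintro _ ⟨_, ⟨p, rfl⟩, rfl⟩
    refine Subgroup.subset_closure ⟨p.1.1, L.mul p.1.1 p.1.2, ?_⟩
    rw [L.cancel]
    exact toPerm_of L p
  · rw [Subgroup.closure_le]
    rintro _ ⟨v, w, rfl⟩
    exact ⟨edge L v (L.mul v w), by rw [toPerm_edge, L.cancel]⟩

end Group

end FreeSteiner

/-- For a free Steiner loop `(S, ι)` on `X`, the stabilizer of `e`
in `Mult(S)` (the inner mapping group) is generated by the elements
`R_v ∘ R_w ∘ R_{v·w}`, `v, w ∈ S`, and is a free group. -/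
theorem inner_mapping_group_of_free_steiner_loop {X S : Type} (L : SteinerLoopStruct S)
    (ι : X → S) (hfree : IsFreeSteinerLoop L ι) :
    L.Mult ⊓ MulAction.stabilizer (Equiv.Perm S) L.e =
      Subgroup.closure
        {σ : Equiv.Perm S | ∃ v w : S, σ = L.R v * L.R w * L.R (L.mul v w)} ∧
    ∃ T : Type, Nonempty
      (↥(L.Mult ⊓ MulAction.stabilizer (Equiv.Perm S) L.e) ≃* FreeGroup T) := by
  open FreeSteiner in
  refine ⟨stabilizer_eq L, ?_⟩
  rw [stabilizer_eq L]
  by_cases hX : ∃ x y z : X, x ≠ y ∧ y ≠ z ∧ x ≠ z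
  · obtain ⟨x, y, z, hxy, hyz, hxz⟩ := hX
    have hinj : Function.Injective (toPerm L) :=
      (liftInv_R_injective L (faithful_of_free hfree hxy hyz hxz)).comp (toG_injective L)
    rw [← range_toPerm L]
    exact ⟨Edge L, ⟨(MonoidHom.ofInjective hinj).symm⟩⟩
  · -- With at most two generators the loop has at most four elements and trivial inner mappings.
    obtain ⟨a, b, hab⟩ : ∃ a b : S, ∀ x, ι x = a ∨ ι x = b := by
      by_cases h : ∃ x y : X, x ≠ y
      · obtain ⟨x, y, hxy⟩ := h
        refine ⟨ι x, ι y, fun z => ?_⟩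
        by_contra! hz
        exact hX ⟨x, y, z, hxy, fun h => hz.2 (by rw [h]), fun h => hz.1 (by rw [h])⟩
      · push Not at h
        rcases isEmpty_or_nonempty X with hE | ⟨⟨x⟩⟩
        · exact ⟨L.e, L.e, fun x => hE.elim x⟩
        · exact ⟨ι x, ι x, fun y => Or.inl (by rw [h y x])⟩
    have hS : ∀ s, s = L.e ∨ s = a ∨ s = b ∨ s = L.mul a b := by
      obtain ⟨h, -, h1, -⟩ := exists_iso hfree
      have key : ∀ t : Tm X, Tm.eval L ι t = L.e ∨ Tm.eval L ι t = a ∨ Tm.eval L ι t = b ∨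
          Tm.eval L ι t = L.mul a b := by
        intro t
        induction t with
        | e => exact Or.inl rfl
        | gen x => exact Or.inr ((hab x).imp_right Or.inl)
        | nd s t hs ht =>
          have h2 : L.mul b a = L.mul a b := L.comm b a
          have h3 : L.mul b (L.mul a b) = a := by rw [L.comm, cancel_right]
          rw [Tm.eval]
          rcases hs with hs | hs | hs | hs <;> rcases ht with ht | ht | ht | ht <;>
            simp [hs, ht, L.one_mul, mul_one', L.mul_self, L.cancel, cancel_right, cancel_mid,
              h2, h3]
      intro s
      rw [← h1 s]
      exact key _
    have hbot : Subgroup.closure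
        {σ : Equiv.Perm S | ∃ v w : S, σ = L.R v * L.R w * L.R (L.mul v w)} = ⊥ := by
      rw [Subgroup.closure_eq_bot_iff]
      rintro _ ⟨v, w, rfl⟩
      exact small L a b hS v w
    rw [hbot]
    exact ⟨Empty, ⟨MulEquiv.ofUnique⟩⟩
end

section
/- Let (S, ι) be a free Steiner loop on a set X having more than 2 elements, with identity e. Then for any two distinct elements x, y ∈ S with x ≠ e and y ≠ e, there exists z ∈ S such that (x·y)·z ≠ x·(y·z). -/
/-! ### Normal forms -/

/-- Binary trees over `X` with an extra leaf `e` for the identity. -/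
inductive STree (X : Type) : Type
  | e : STree X
  | gen : X → STree X
  | node : STree X → STree X → STree X

namespace STree

open Classical in
/-- The tree representing the unordered pair `{a, b}`: its subtrees are put in increasing order
for a fixed well-order. -/
noncomputable def mk {X : Type} (a b : STree X) : STree X :=
  if WellOrderingRel a b then node a b else node b a

open Classical in
/-- `other a b = some d` when `b` is a pair with components `a` and `d`; it is `none` when `a` is
not a component of `b`. -/
noncomputable def other {X : Type} (a : STree X) : STree X → Option (STree X)
  | e => none
  | gen _ => none
  | node c d => if a = c then some d else if a = d then some c else none

/-- Number of nodes and generators. -/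
def size {X : Type} : STree X → ℕ
  | e => 0
  | gen _ => 1
  | node a b => size a + size b + 1

/-- `{a, b}` satisfies the conditions of a normal form at its root. -/
structure Adm {X : Type} (a b : STree X) : Prop where
  intro ::
  left_ne : a ≠ e
  right_ne : b ≠ e
  ne : a ≠ b
  other_left : other a b = none
  other_right : other b a = none

/-- Trees in normal form, with every pair in increasing order. -/
def Red {X : Type} : STree X → Prop
  | e => True
  | gen _ => True
  | node a b => Red a ∧ Red b ∧ WellOrderingRel a b ∧ Adm a b

open Classical in
/-- The product of the free Steiner loop, meaningful on reduced trees. -/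
noncomputable def mul {X : Type} (a b : STree X) : STree X :=
  if a = e then b else if b = e then a else if a = b then e else
    match other a b with
    | some d => d
    | none =>
      match other b a with
      | some d => d
      | none => mk a b

variable {X : Type} {a b c d : STree X}

lemma Adm.symm (h : Adm a b) : Adm b a :=
  ⟨h.right_ne, h.left_ne, h.ne.symm, h.other_right, h.other_left⟩

lemma mk_comm (h : a ≠ b) : mk a b = mk b a := by
  unfold mk
  rcases trichotomous_of WellOrderingRel a b with h1 | h1 | h1
  · rw [if_pos h1, if_neg (asymm_of WellOrderingRel h1)]
  · exact absurd h1 h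
  · rw [if_pos h1, if_neg (asymm_of WellOrderingRel h1)]

lemma mk_inj (h : mk a b = mk c d) : a = c ∧ b = d ∨ a = d ∧ b = c := by
  unfold mk at h
  split_ifs at h <;> injection h <;> simp_all

lemma mk_ne_e : mk a b ≠ e := by
  unfold mk; split_ifs <;> simp

lemma size_mk : size (mk a b) = size a + size b + 1 := by
  unfold mk; split_ifs <;> simp [size]; omega

lemma other_mk_left : other a (mk a b) = some b := by
  unfold mk
  split_ifs
  · simp [other]
  · by_cases h : a = b <;> simp [other, h]

lemma other_mk_none (h1 : c ≠ a) (h2 : c ≠ b) : other c (mk a b) = none := by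
  unfold mk; split_ifs <;> simp [other, h1, h2]

lemma size_lt_of_other (h : other a b = some d) : size a < size b := by
  cases b with
  | e => simp [other] at h
  | gen x => simp [other] at h
  | node c d =>
    simp only [other] at h
    split_ifs at h with h1 h2
    · subst h1; simp only [size]; omega
    · subst h2; simp only [size]; omega

lemma other_none_of_size_le (h : size b ≤ size a) : other a b = none := by
  cases h1 : other a b with
  | none => rfl
  | some d => have := size_lt_of_other h1; omega

lemma red_mk (ha : Red a) (hb : Red b) (h : Adm a b) : Red (mk a b) := by
  unfold mk
  split_ifs with h1
  · exact ⟨ha, hb, h1, h⟩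
  · rcases trichotomous_of WellOrderingRel a b with h2 | h2 | h2
    · exact absurd h2 h1
    · exact absurd h2 h.ne
    · exact ⟨hb, ha, h2, h.symm⟩

lemma eq_mk_of_other (hb : Red b) (h : other a b = some d) :
    Red d ∧ Adm a d ∧ b = mk a d := by
  cases b with
  | e => simp [other] at h
  | gen x => simp [other] at h
  | node p q =>
    obtain ⟨hp, hq, hr, hadm⟩ := hb
    have hpq : node p q = mk p q := by unfold mk; rw [if_pos hr]
    simp only [other] at h
    split_ifs at h with h1 h2
    · obtain rfl := Option.some.inj h
      subst h1
      exact ⟨hq, hadm, hpq⟩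
    · obtain rfl := Option.some.inj h
      subst h2
      exact ⟨hp, hadm.symm, by rw [hpq, mk_comm hadm.ne]⟩

/-- Two distinct reduced non-identity trees either form a reduced pair, or one is a component of
the other. -/
lemma trichotomy (ha : Red a) (hb : Red b) (hae : a ≠ e) (hbe : b ≠ e) (hab : a ≠ b) :
    Adm a b ∨ (∃ d, Red d ∧ Adm a d ∧ b = mk a d) ∨ (∃ d, Red d ∧ Adm b d ∧ a = mk b d) := by
  cases h1 : other a b with
  | some d => exact Or.inr (Or.inl ⟨d, eq_mk_of_other hb h1⟩)
  | none =>
    cases h2 : other b a with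
    | some d => exact Or.inr (Or.inr ⟨d, eq_mk_of_other ha h2⟩)
    | none => exact Or.inl ⟨hae, hbe, hab, h1, h2⟩

/-! ### The Steiner loop of normal forms -/

lemma e_mul : mul e a = a := by simp [mul]

lemma mul_e : mul a e = a := by
  by_cases h : a = e <;> simp [mul, h]

lemma mul_self' : mul a a = e := by
  by_cases h : a = e <;> simp [mul, h]

lemma Adm.mul_eq (h : Adm a b) : mul a b = mk a b := by
  simp [mul, h.left_ne, h.right_ne, h.ne, h.other_left, h.other_right]

lemma ne_mk : a ≠ mk a b := by
  intro h
  have := congrArg size h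
  rw [size_mk] at this; omega

lemma Adm.mul_mk (h : Adm a b) : mul a (mk a b) = b := by
  simp [mul, h.left_ne, mk_ne_e, ne_mk, other_mk_left]

lemma Adm.mk_mul (h : Adm a b) : mul (mk a b) a = b := by
  have h1 : other (mk a b) a = none := other_none_of_size_le (by rw [size_mk]; omega)
  simp [mul, h.left_ne, mk_ne_e, ne_mk.symm, other_mk_left, h1]

lemma mul_comm' (ha : Red a) (hb : Red b) : mul a b = mul b a := by
  by_cases hae : a = e
  · rw [hae, e_mul, mul_e]
  by_cases hbe : b = e
  · rw [hbe, e_mul, mul_e]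
  by_cases hab : a = b
  · rw [hab]
  rcases trichotomy ha hb hae hbe hab with h | ⟨d, -, h, rfl⟩ | ⟨d, -, h, rfl⟩
  · rw [h.mul_eq, h.symm.mul_eq, mk_comm hab]
  · rw [h.mul_mk, h.mk_mul]
  · rw [h.mul_mk, h.mk_mul]

lemma mul_cancel' (ha : Red a) (hb : Red b) : mul a (mul a b) = b := by
  by_cases hae : a = e
  · rw [hae, e_mul, e_mul]
  by_cases hbe : b = e
  · rw [hbe, mul_e, mul_self']
  by_cases hab : a = b
  · rw [hab, mul_self', mul_e]
  rcases trichotomy ha hb hae hbe hab with h | ⟨d, -, h, rfl⟩ | ⟨d, -, h, rfl⟩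
  · rw [h.mul_eq, h.mul_mk]
  · rw [h.mul_mk, h.mul_eq]
  · rw [h.mk_mul, mk_comm h.ne, h.symm.mk_mul]

lemma red_mul (ha : Red a) (hb : Red b) : Red (mul a b) := by
  by_cases hae : a = e
  · rwa [hae, e_mul]
  by_cases hbe : b = e
  · rwa [hbe, mul_e]
  by_cases hab : a = b
  · rw [hab, mul_self']; trivial
  rcases trichotomy ha hb hae hbe hab with h | ⟨d, hd, h, rfl⟩ | ⟨d, hd, h, rfl⟩
  · rw [h.mul_eq]; exact red_mk ha hb h
  · rwa [h.mul_mk]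
  · rwa [h.mk_mul]

/-- The Steiner loop of reduced trees. -/
noncomputable def loop (X : Type) : SteinerLoopStruct {t : STree X // Red t} where
  mul a b := ⟨mul a.1 b.1, red_mul a.2 b.2⟩
  e := ⟨e, trivial⟩
  comm a b := Subtype.ext (mul_comm' a.2 b.2)
  one_mul _ := Subtype.ext e_mul
  mul_self _ := Subtype.ext mul_self'
  cancel a b := Subtype.ext (mul_cancel' a.2 b.2)

/-! ### Evaluation in a Steiner loop -/

/-- Evaluation of a tree in a Steiner loop, given the values of the generators. -/
def eval {S : Type} (L : SteinerLoopStruct S) (f : X → S) : STree X → S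
  | e => L.e
  | gen x => f x
  | node a b => L.mul (eval L f a) (eval L f b)

lemma eval_mk {S : Type} (L : SteinerLoopStruct S) (f : X → S) :
    eval L f (mk a b) = L.mul (eval L f a) (eval L f b) := by
  unfold mk
  split_ifs
  · rfl
  · exact L.comm _ _

lemma eval_mul {S : Type} (L : SteinerLoopStruct S) (f : X → S) (ha : Red a) (hb : Red b) :
    eval L f (mul a b) = L.mul (eval L f a) (eval L f b) := by
  by_cases hae : a = e
  · rw [hae, e_mul]; exact (L.one_mul _).symm
  by_cases hbe : b = e
  · rw [hbe, mul_e, L.comm]; exact (L.one_mul _).symm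
  by_cases hab : a = b
  · rw [hab, mul_self', L.mul_self]; rfl
  rcases trichotomy ha hb hae hbe hab with h | ⟨d, -, h, rfl⟩ | ⟨d, -, h, rfl⟩
  · rw [h.mul_eq, eval_mk]
  · rw [h.mul_mk, eval_mk, L.cancel]
  · rw [h.mk_mul, eval_mk, L.comm, L.cancel]

/-! ### Nonassociating triples -/

/-- Nonassociativity as soon as `z` is large and has none of `x`, `y`, `x·y` as a component. -/
lemma nonassoc {x y z : STree X} (hx : Red x) (hy : Red y) (hxe : x ≠ e) (hye : y ≠ e)
    (hxy : x ≠ y) (h1 : size x < size z) (h2 : size y < size z) (h3 : size (mul x y) < size z)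
    (h5 : other y z = none) (h6 : other (mul x y) z = none) :
    mul (mul x y) z ≠ mul x (mul y z) := by
  have hze : z ≠ e := by rintro rfl; simp [size] at h1
  have hpe : mul x y ≠ e := by
    intro h
    have := mul_cancel' hx hy
    rw [h, mul_e] at this
    exact hxy this
  have ne_of_lt : ∀ t : STree X, size t < size z → t ≠ z := by
    rintro t ht rfl; omega
  have hp : Adm (mul x y) z :=
    ⟨hpe, hze, ne_of_lt _ h3, h6, other_none_of_size_le h3.le⟩
  have hyz : Adm y z := ⟨hye, hze, ne_of_lt _ h2, h5, other_none_of_size_le h2.le⟩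
  have hxyz : Adm x (mk y z) := by
    refine ⟨hxe, mk_ne_e, ?_, other_mk_none hxy (ne_of_lt _ h1),
      other_none_of_size_le (by rw [size_mk]; omega)⟩
    rintro rfl
    rw [size_mk] at h1; omega
  rw [hp.mul_eq, hyz.mul_eq, hxyz.mul_eq]
  intro h
  rcases mk_inj h with ⟨-, h⟩ | ⟨-, h⟩
  · have := congrArg size h
    rw [size_mk] at this; omega
  · exact ne_of_lt _ h1 h.symm

/-- The iterates of `w ↦ (i·w)·(j·w)` starting from `k`. -/
noncomputable def tower (i j k : X) : ℕ → STree X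
  | 0 => gen k
  | n + 1 => mul (mul (gen i) (tower i j k n)) (mul (gen j) (tower i j k n))

/-- One step `w ↦ (i·w)·(j·w)` involves no cancellation when `w` is neither `i` nor `j` and has
neither as a component. -/
lemma step_eq {i j : X} {w : STree X} (hij : i ≠ j) (hw : 1 ≤ size w) (hi : gen i ≠ w)
    (hj : gen j ≠ w) (hoi : other (gen i) w = none) (hoj : other (gen j) w = none) :
    mul (mul (gen i) w) (mul (gen j) w) = mk (mk (gen i) w) (mk (gen j) w) := by
  have hwe : w ≠ e := by rintro rfl; simp [size] at hw
  have h1 : Adm (gen i) w := ⟨by simp, hwe, hi, hoi, rfl⟩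
  have h2 : Adm (gen j) w := ⟨by simp, hwe, hj, hoj, rfl⟩
  rw [h1.mul_eq, h2.mul_eq]
  refine Adm.mul_eq ⟨mk_ne_e, mk_ne_e, ?_, ?_, ?_⟩
  · intro h
    rcases mk_inj h with ⟨h, -⟩ | ⟨h, -⟩
    · injection h with h; exact hij h
    · exact hi h
  · exact other_none_of_size_le (by simp [size_mk, size])
  · exact other_none_of_size_le (by simp [size_mk, size])

lemma tower_spec {i j k : X} (hij : i ≠ j) (hik : i ≠ k) (hjk : j ≠ k) (n : ℕ) :
    n + 1 ≤ size (tower i j k n) ∧ gen i ≠ tower i j k n ∧ gen j ≠ tower i j k n ∧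
      other (gen i) (tower i j k n) = none ∧ other (gen j) (tower i j k n) = none := by
  induction n with
  | zero => simp [tower, size, other, hik, hjk]
  | succ n ih =>
    obtain ⟨h1, h2, h3, h4, h5⟩ := ih
    have hs := step_eq hij (by omega) h2 h3 h4 h5
    have gen_ne : ∀ (l : X) (a b : STree X), gen l ≠ mk a b := by
      intro l a b; unfold mk; split_ifs <;> simp
    simp only [tower]
    rw [hs]
    refine ⟨?_, gen_ne _ _ _, gen_ne _ _ _, other_mk_none (gen_ne _ _ _) (gen_ne _ _ _),
      other_mk_none (gen_ne _ _ _) (gen_ne _ _ _)⟩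
    simp only [size_mk]; omega

lemma other_tower {i j k : X} (hij : i ≠ j) (hik : i ≠ k) (hjk : j ≠ k) {n : ℕ} {t : STree X}
    (ht : size t ≤ n) : other t (tower i j k (n + 1)) = none := by
  obtain ⟨h1, h2, h3, h4, h5⟩ := tower_spec hij hik hjk n
  simp only [tower]
  rw [step_eq hij (by omega) h2 h3 h4 h5]
  apply other_mk_none <;> rintro rfl <;> rw [size_mk] at ht <;> omega

end STree


/-- In a free Steiner loop `(S, ι)` on a set `X` with more than 2
elements, for any distinct `x, y ∈ S` with `x ≠ e ≠ y` there is `z ∈ S` with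
`(x·y)·z ≠ x·(y·z)`. -/
theorem free_steiner_loop_nonassociative {X S : Type} (L : SteinerLoopStruct S)
    (ι : X → S) (hfree : IsFreeSteinerLoop L ι)
    (hX : ∃ i j k : X, i ≠ j ∧ i ≠ k ∧ j ≠ k)
    (x y : S) (hxy : x ≠ y) (hx : x ≠ L.e) (hy : y ≠ L.e) :
    ∃ z : S, L.mul (L.mul x y) z ≠ L.mul x (L.mul y z) := by
  obtain ⟨i, j, k, hij, hik, hjk⟩ := hX
  obtain ⟨h, ⟨hhom, hι⟩, -⟩ := hfree _ (STree.loop X) (fun l => ⟨STree.gen l, trivial⟩)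
  have hgen : ∀ l, (h (ι l)).1 = STree.gen l := fun l => congrArg Subtype.val (congrFun hι l)
  have hmul : ∀ a b, (h (L.mul a b)).1 = STree.mul (h a).1 (h b).1 :=
    fun a b => congrArg Subtype.val (hhom a b)
  -- Evaluation after `h` is an endomorphism of `S` fixing the generators, hence the identity.
  have hleft : (fun s => STree.eval L ι (h s).1) = id := by
    refine (hfree S L ι).unique ⟨fun a b => ?_, ?_⟩ ⟨fun _ _ => rfl, rfl⟩
    · simp only [hmul]
      exact STree.eval_mul L ι (h a).2 (h b).2
    · funext l
      simp only [Function.comp, hgen]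
      rfl
  have hinj : ∀ a b, (h a).1 = (h b).1 → a = b := fun a b hab => by
    have ha := congrFun hleft a
    have hb := congrFun hleft b
    simp only [id] at ha hb
    rw [← ha, ← hb, hab]
  have he : (h L.e).1 = STree.e := by
    rw [← L.mul_self L.e, hmul, STree.mul_self']
  have htower : ∀ n, ∃ z, (h z).1 = STree.tower i j k n := by
    intro n
    induction n with
    | zero => exact ⟨ι k, hgen k⟩
    | succ n ih =>
      obtain ⟨w, hw⟩ := ih
      exact ⟨L.mul (L.mul (ι i) w) (L.mul (ι j) w), by
        simp only [hmul, hgen, hw, STree.tower]⟩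
  let n := (h x).1.size + (h y).1.size + (STree.mul (h x).1 (h y).1).size
  obtain ⟨z, hz⟩ := htower (n + 1)
  refine ⟨z, fun hassoc => ?_⟩
  have hsize := (STree.tower_spec hij hik hjk (n + 1)).1
  have hassoc' := congrArg (fun s => (h s).1) hassoc
  simp only [hmul, hz] at hassoc'
  refine STree.nonassoc (h x).2 (h y).2 (fun h0 => hx (hinj _ _ (h0.trans he.symm)))
    (fun h0 => hy (hinj _ _ (h0.trans he.symm))) (fun h0 => hxy (hinj _ _ h0)) ?_ ?_ ?_
    (STree.other_tower hij hik hjk ?_) (STree.other_tower hij hik hjk ?_) hassoc' <;> omega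
end

section
/- Let (S, ι) be a free Steiner loop on a set X having more than 2 elements, with identity e. Then the nucleus of S is trivial: if u ∈ S satisfies (u·x)·y = u·(x·y), (x·y)·u = x·(y·u) and (x·u)·y = x·(u·y) for all x, y ∈ S, then u = e. Consequently the center of S (the set of elements of the nucleus commuting with all elements) equals {e}. -/
/-! ### Words and unordered pairs -/

/-- Nonassociative words over `X`, with an empty word `one`. Unordered pairs are encoded through
`SteinerWord.mk`, which sorts the two entries. -/
inductive SteinerWord (X : Type) : Type
  | one : SteinerWord X
  | leaf : X → SteinerWord X
  | node : SteinerWord X → SteinerWord X → SteinerWord X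

namespace SteinerWord

variable {X : Type}

/-- The number of leaves of a word, the empty word counting as one leaf. -/
def size : SteinerWord X → ℕ
  | one => 1
  | leaf _ => 1
  | node a b => size a + size b

theorem size_pos (a : SteinerWord X) : 0 < a.size := by
  induction a <;> simp [size]; omega

open scoped Classical in
/-- The unordered pair of two words: the entries are sorted by an arbitrary well-ordering of the
type of all words. -/
noncomputable def mk (a b : SteinerWord X) : SteinerWord X :=
  if WellOrderingRel a b then node a b else node b a

theorem mk_comm (a b : SteinerWord X) : mk a b = mk b a := by
  unfold mk
  by_cases h1 : WellOrderingRel a b <;> by_cases h2 : WellOrderingRel b a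
  · exact absurd h2 (asymm h1)
  · simp [h1, h2]
  · simp [h1, h2]
  · have : a = b := by
      rcases trichotomous_of WellOrderingRel a b with h | h | h
      · exact absurd h h1
      · exact h
      · exact absurd h h2
    rw [this]

theorem mk_cases (a b : SteinerWord X) : mk a b = node a b ∨ mk a b = node b a := by
  unfold mk; split <;> simp

theorem mk_ne_one (a b : SteinerWord X) : mk a b ≠ one := by
  rcases mk_cases a b with h | h <;> simp [h]

theorem mk_ne_leaf (a b : SteinerWord X) (x : X) : mk a b ≠ leaf x := by
  rcases mk_cases a b with h | h <;> simp [h]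

theorem size_mk (a b : SteinerWord X) : (mk a b).size = a.size + b.size := by
  rcases mk_cases a b with h | h <;> simp [h, size, add_comm]

theorem mk_inj {a b c d : SteinerWord X} (h : mk a b = mk c d) :
    (a = c ∧ b = d) ∨ (a = d ∧ b = c) := by
  rcases mk_cases a b with h1 | h1 <;> rcases mk_cases c d with h2 | h2 <;>
    · rw [h1, h2] at h
      injection h with h3 h4
      simp [h3, h4]

theorem mk_inj_left {a b c : SteinerWord X} (h : mk a b = mk a c) : b = c := by
  rcases mk_inj h with ⟨_, h⟩ | ⟨h1, h2⟩
  · exact h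
  · rw [h2, h1]

theorem ne_mk_left (a b : SteinerWord X) : a ≠ mk a b := by
  intro h
  have := congrArg size h
  have := size_pos b
  rw [size_mk] at *
  omega

theorem ne_mk_mk (a b c : SteinerWord X) : a ≠ mk (mk a b) c := by
  intro h
  have := congrArg size h
  have := size_pos b
  rw [size_mk, size_mk] at *
  omega

/-! ### The Steiner loop of reduced words -/

/-- No Steiner loop law simplifies the product of `a` and `b`. -/
structure Irr (a b : SteinerWord X) : Prop where
  left_ne_one : a ≠ one
  right_ne_one : b ≠ one
  ne : a ≠ b
  left_ne : ∀ c, a ≠ mk b c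
  right_ne : ∀ c, b ≠ mk a c

theorem Irr.symm {a b : SteinerWord X} (h : Irr a b) : Irr b a :=
  ⟨h.2, h.1, h.3.symm, h.5, h.4⟩

/-- Reduced words: every pair occurring in the word is irreducible. -/
inductive Red : SteinerWord X → Prop
  | one : Red one
  | leaf (x : X) : Red (leaf x)
  | mk {a b : SteinerWord X} : Red a → Red b → Irr a b → Red (mk a b)

theorem Red.of_mk {a b : SteinerWord X} (h : Red (SteinerWord.mk a b)) :
    Red a ∧ Red b ∧ Irr a b := by
  generalize hc : SteinerWord.mk a b = c at h
  cases h with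
  | one => exact absurd hc (mk_ne_one _ _)
  | leaf x => exact absurd hc (mk_ne_leaf _ _ _)
  | mk ha hb hi =>
    rcases mk_inj hc with ⟨rfl, rfl⟩ | ⟨rfl, rfl⟩
    · exact ⟨ha, hb, hi⟩
    · exact ⟨hb, ha, hi.symm⟩

open scoped Classical in
/-- Multiplication of reduced words: cancel if one of the laws applies, otherwise form the pair. -/
noncomputable def mul (a b : SteinerWord X) : SteinerWord X :=
  if a = one then b
  else if b = one then a
  else if a = b then one
  else if h : ∃ c, a = mk b c then h.choose
  else if h : ∃ c, b = mk a c then h.choose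
  else mk a b

theorem one_mul (b : SteinerWord X) : mul one b = b := by simp [mul]

theorem mul_one (a : SteinerWord X) : mul a one = a := by
  unfold mul; split <;> simp_all

theorem mul_self (a : SteinerWord X) : mul a a = one := by
  unfold mul; split <;> simp_all

theorem mk_mul {b c : SteinerWord X} (hb : b ≠ one) : mul (mk b c) b = c := by
  have h : ∃ d, mk b c = mk b d := ⟨c, rfl⟩
  unfold mul
  rw [if_neg (mk_ne_one _ _), if_neg hb, if_neg (ne_mk_left b c).symm, dif_pos h]
  exact (mk_inj_left h.choose_spec).symm

theorem mul_mk {a c : SteinerWord X} (ha : a ≠ one) : mul a (mk a c) = c := by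
  have h : ∃ d, mk a c = mk a d := ⟨c, rfl⟩
  have h' : ¬ ∃ d, a = mk (mk a c) d := fun ⟨d, hd⟩ => ne_mk_mk _ _ _ hd
  unfold mul
  rw [if_neg ha, if_neg (mk_ne_one _ _), if_neg (ne_mk_left a c), dif_neg h', dif_pos h]
  exact (mk_inj_left h.choose_spec).symm

theorem Irr.mul_eq {a b : SteinerWord X} (h : Irr a b) : mul a b = SteinerWord.mk a b := by
  unfold mul
  rw [if_neg h.1, if_neg h.2, if_neg h.3, dif_neg (fun ⟨c, hc⟩ => h.4 c hc),
    dif_neg (fun ⟨c, hc⟩ => h.5 c hc)]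

/-- The case distinction behind every law of the word loop: apart from the trivial products, two
reduced words are two of the three members of a triple `x, y, mk x y` with `Irr x y`. -/
theorem trichotomy {a b : SteinerWord X} (ha : Red a) (hb : Red b) :
    a = one ∨ b = one ∨ a = b ∨ (∃ c, a = mk b c ∧ Irr b c ∧ Red c) ∨
      (∃ c, b = mk a c ∧ Irr a c ∧ Red c) ∨ Irr a b := by
  by_cases h1 : a = one
  · exact .inl h1
  by_cases h2 : b = one
  · exact .inr (.inl h2)
  by_cases h3 : a = b
  · exact .inr (.inr (.inl h3))
  by_cases h4 : ∃ c, a = mk b c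
  · obtain ⟨c, rfl⟩ := h4
    exact .inr (.inr (.inr (.inl ⟨c, rfl, ha.of_mk.2.2, ha.of_mk.2.1⟩)))
  by_cases h5 : ∃ c, b = mk a c
  · obtain ⟨c, rfl⟩ := h5
    exact .inr (.inr (.inr (.inr (.inl ⟨c, rfl, hb.of_mk.2.2, hb.of_mk.2.1⟩))))
  · exact .inr (.inr (.inr (.inr (.inr
      ⟨h1, h2, h3, fun c hc => h4 ⟨c, hc⟩, fun c hc => h5 ⟨c, hc⟩⟩))))

theorem Red.mul {a b : SteinerWord X} (ha : Red a) (hb : Red b) : Red (SteinerWord.mul a b) := by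
  rcases trichotomy ha hb with rfl | rfl | rfl | ⟨c, rfl, hi, hc⟩ | ⟨c, rfl, hi, hc⟩ | hi
  · rwa [one_mul]
  · rwa [mul_one]
  · rw [mul_self]; exact Red.one
  · rwa [mk_mul hi.1]
  · rwa [mul_mk hi.1]
  · rw [hi.mul_eq]; exact Red.mk ha hb hi

theorem mul_comm {a b : SteinerWord X} (ha : Red a) (hb : Red b) : mul a b = mul b a := by
  rcases trichotomy ha hb with rfl | rfl | rfl | ⟨c, rfl, hi, hc⟩ | ⟨c, rfl, hi, hc⟩ | hi
  · rw [one_mul, mul_one]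
  · rw [one_mul, mul_one]
  · rfl
  · rw [mk_mul hi.1, mul_mk hi.1]
  · rw [mk_mul hi.1, mul_mk hi.1]
  · rw [hi.mul_eq, hi.symm.mul_eq, mk_comm]

theorem mul_cancel {a b : SteinerWord X} (ha : Red a) (hb : Red b) : mul a (mul a b) = b := by
  rcases trichotomy ha hb with rfl | rfl | rfl | ⟨c, rfl, hi, hc⟩ | ⟨c, rfl, hi, hc⟩ | hi
  · rw [one_mul, one_mul]
  · rw [mul_one, mul_self]
  · rw [mul_self, mul_one]
  · rw [mk_mul hi.1, mk_comm, mk_mul hi.2]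
  · rw [mul_mk hi.1, hi.mul_eq]
  · rw [hi.mul_eq, mul_mk hi.1]

/-- The Steiner loop of reduced words over `X`. -/
noncomputable def wordLoop (X : Type) : SteinerLoopStruct {a : SteinerWord X // Red a} where
  mul a b := ⟨mul a.1 b.1, a.2.mul b.2⟩
  e := ⟨one, Red.one⟩
  comm a b := Subtype.ext (mul_comm a.2 b.2)
  one_mul a := Subtype.ext (one_mul a.1)
  mul_self a := Subtype.ext (mul_self a.1)
  cancel a b := Subtype.ext (mul_cancel a.2 b.2)

/-! ### Evaluation in a Steiner loop -/

/-- Evaluation of a word in a Steiner loop, given the values of the letters. -/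
def eval {S : Type} (L : SteinerLoopStruct S) (ι : X → S) : SteinerWord X → S
  | one => L.e
  | leaf x => ι x
  | node a b => L.mul (eval L ι a) (eval L ι b)

theorem eval_mk {S : Type} (L : SteinerLoopStruct S) (ι : X → S) (a b : SteinerWord X) :
    eval L ι (mk a b) = L.mul (eval L ι a) (eval L ι b) := by
  rcases mk_cases a b with h | h <;> rw [h, eval]
  exact L.comm _ _

theorem eval_mul {S : Type} (L : SteinerLoopStruct S) (ι : X → S) {a b : SteinerWord X}
    (ha : Red a) (hb : Red b) : eval L ι (mul a b) = L.mul (eval L ι a) (eval L ι b) := by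
  rcases trichotomy ha hb with rfl | rfl | rfl | ⟨c, rfl, hi, hc⟩ | ⟨c, rfl, hi, hc⟩ | hi
  · rw [one_mul, eval, L.one_mul]
  · rw [mul_one, eval, L.comm, L.one_mul]
  · rw [mul_self, eval, L.mul_self]
  · rw [mk_mul hi.1, eval_mk, L.comm, L.cancel]
  · rw [mul_mk hi.1, eval_mk, L.cancel]
  · rw [hi.mul_eq, eval_mk]

/-! ### Nonempty reduced words are not nuclear -/

theorem not_assoc {v : SteinerWord X} (hv : Red v) (hv1 : v ≠ one) {p q : X} (hpq : p ≠ q)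
    (hp : v ≠ leaf p) (hq : v ≠ leaf q) (hvp : ∀ c, v ≠ mk (leaf p) c) :
    mul (mul v (leaf p)) (leaf q) ≠ mul v (mul (leaf p) (leaf q)) := by
  have hpq' : leaf p ≠ leaf q := fun h => hpq (by injection h)
  have i1 : Irr v (leaf p) :=
    ⟨hv1, by simp, hp, hvp, fun c => (mk_ne_leaf _ _ _).symm⟩
  have i2 : Irr (mk v (leaf p)) (leaf q) := by
    refine ⟨mk_ne_one _ _, by simp, mk_ne_leaf _ _ _, fun c h => ?_,
      fun c => (mk_ne_leaf _ _ _).symm⟩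
    rcases mk_inj h with ⟨h, _⟩ | ⟨_, h⟩
    · exact hq h
    · exact hpq' h
  have i3 : Irr (leaf p) (leaf q) :=
    ⟨by simp, by simp, hpq', fun c => (mk_ne_leaf _ _ _).symm, fun c => (mk_ne_leaf _ _ _).symm⟩
  rw [i1.mul_eq, i2.mul_eq, i3.mul_eq]
  rcases trichotomy hv (Red.mk (Red.leaf p) (Red.leaf q) i3) with
    h | h | h | ⟨c, hc, hi, _⟩ | ⟨c, hc, hi, _⟩ | hi
  · exact absurd h hv1
  · exact absurd h (mk_ne_one _ _)
  · exact absurd h (hvp _)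
  · -- the right-hand side is the proper subword `c` of `v`, the left-hand side is longer than `v`
    intro h
    have h2 := congrArg size hc
    rw [hc, mk_mul hi.1, ← hc] at h
    have h1 := congrArg size h
    have := size_pos v
    have := size_pos (mk (leaf p) (leaf q))
    have := size_pos (leaf q)
    simp only [size_mk] at *
    omega
  · rcases mk_inj hc with ⟨h, _⟩ | ⟨_, h⟩
    · exact absurd h.symm hp
    · exact absurd h.symm hq
  · rw [hi.mul_eq]
    intro h
    rcases mk_inj h with ⟨h, _⟩ | ⟨_, h⟩
    · exact ne_mk_left _ _ h.symm
    · exact hq h.symm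

theorem exists_letters {v : SteinerWord X} (hv : Red v)
    (hX : ∃ i j k : X, i ≠ j ∧ i ≠ k ∧ j ≠ k) :
    ∃ p q : X, p ≠ q ∧ v ≠ leaf p ∧ v ≠ leaf q ∧ ∀ c, v ≠ mk (leaf p) c := by
  obtain ⟨i, j, k, hij, hik, hjk⟩ := hX
  cases hv with
  | one => exact ⟨i, j, hij, by simp, by simp, fun c => (mk_ne_one _ _).symm⟩
  | leaf x =>
    have : ∃ p q : X, p ≠ q ∧ x ≠ p ∧ x ≠ q := by
      by_cases h1 : x = i
      · exact ⟨j, k, hjk, h1 ▸ hij, h1 ▸ hik⟩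
      by_cases h2 : x = j
      · exact ⟨i, k, hik, h1, h2 ▸ hjk⟩
      · exact ⟨i, j, hij, h1, h2⟩
    obtain ⟨p, q, hpq, h1, h2⟩ := this
    exact ⟨p, q, hpq, by simpa using h1, by simpa using h2, fun c => (mk_ne_leaf _ _ _).symm⟩
  | @mk a b ha hb hi =>
    have key : ∃ p : X, leaf p ≠ a ∧ leaf p ≠ b := by
      by_contra! hcon
      have inj : ∀ {x y : X} {c : SteinerWord X}, leaf x = c → leaf y = c → x = y :=
        fun h1 h2 => by injection h1.trans h2.symm
      -- pigeonhole: three distinct letters cannot all be among the two entries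
      have hor : ∀ p : X, leaf p = a ∨ leaf p = b := fun p => by
        by_cases h : leaf p = a
        · exact .inl h
        · exact .inr (hcon p h)
      rcases hor i with h1 | h1 <;> rcases hor j with h2 | h2 <;> rcases hor k with h3 | h3 <;>
        first
          | exact hij (inj h1 h2)
          | exact hik (inj h1 h3)
          | exact hjk (inj h2 h3)
    obtain ⟨p, hpa, hpb⟩ := key
    have hq : ∃ q, p ≠ q := by
      by_cases h : p = i
      · exact ⟨j, h ▸ hij⟩
      · exact ⟨i, h⟩
    obtain ⟨q, hpq⟩ := hq
    refine ⟨p, q, hpq, mk_ne_leaf _ _ _, mk_ne_leaf _ _ _, fun c h => ?_⟩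
    rcases mk_inj h with ⟨h, _⟩ | ⟨_, h⟩
    · exact hpa h.symm
    · exact hpb h.symm

end SteinerWord

/-- In a free Steiner loop `(S, ι)` on a set `X` with more than 2
elements, the nucleus is trivial: any `u` lying in the left, right and middle
nuclei equals `e`; consequently the center (nucleus elements commuting with
everything) is `{e}`. -/
theorem free_steiner_loop_trivial_nucleus {X S : Type} (L : SteinerLoopStruct S)
    (ι : X → S) (hfree : IsFreeSteinerLoop L ι)
    (hX : ∃ i j k : X, i ≠ j ∧ i ≠ k ∧ j ≠ k) :
    (∀ u : S,
      (∀ x y, L.mul (L.mul u x) y = L.mul u (L.mul x y)) →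
      (∀ x y, L.mul (L.mul x y) u = L.mul x (L.mul y u)) →
      (∀ x y, L.mul (L.mul x u) y = L.mul x (L.mul u y)) →
      u = L.e) ∧
    {u : S |
      ((∀ x y, L.mul (L.mul u x) y = L.mul u (L.mul x y)) ∧
       (∀ x y, L.mul (L.mul x y) u = L.mul x (L.mul y u)) ∧
       (∀ x y, L.mul (L.mul x u) y = L.mul x (L.mul u y))) ∧
      (∀ x, L.mul u x = L.mul x u)} = {L.e} := by
  have main : ∀ u : S,
      (∀ x y, L.mul (L.mul u x) y = L.mul u (L.mul x y)) → u = L.e := by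
    intro u hu
    obtain ⟨h, ⟨hh, hι⟩, -⟩ := hfree _ (SteinerWord.wordLoop X)
      (fun x => ⟨SteinerWord.leaf x, SteinerWord.Red.leaf x⟩)
    have hx : ∀ x, h (ι x) = ⟨SteinerWord.leaf x, SteinerWord.Red.leaf x⟩ := congrFun hι
    -- evaluation after `h` and the identity both extend `ι`
    have hinv : (fun s => SteinerWord.eval L ι (h s).1) = id := by
      refine (hfree S L ι).unique ⟨fun a b => ?_, ?_⟩ ⟨fun a b => rfl, rfl⟩
      · change SteinerWord.eval L ι (h (L.mul a b)).1 = _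
        rw [hh a b]
        exact SteinerWord.eval_mul L ι (h a).2 (h b).2
      · funext x
        change SteinerWord.eval L ι (h (ι x)).1 = ι x
        rw [hx x]
        rfl
    by_contra hne
    have hv1 : (h u).1 ≠ SteinerWord.one := by
      intro h1
      apply hne
      have h2 : SteinerWord.eval L ι (h u).1 = u := congrFun hinv u
      rw [h1] at h2
      exact h2.symm
    obtain ⟨p, q, hpq, hp, hq, hvp⟩ := SteinerWord.exists_letters (h u).2 hX
    apply SteinerWord.not_assoc (h u).2 hv1 hpq hp hq hvp
    have h3 := congrArg h (hu (ι p) (ι q))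
    rw [hh, hh, hh, hh, hx, hx] at h3
    exact congrArg Subtype.val h3
  refine ⟨fun u hu _ _ => main u hu, Set.eq_singleton_iff_unique_mem.2
    ⟨?_, fun u hu => main u hu.1.1⟩⟩
  have mul_one : ∀ x, L.mul x L.e = x := fun x => by rw [L.comm, L.one_mul]
  refine ⟨⟨fun x y => ?_, fun x y => ?_, fun x y => ?_⟩, fun x => L.comm _ _⟩ <;>
    simp only [L.one_mul, mul_one]
end

section
/- Let Q be a Steiner quasigroup, let a ∈ Q, and define x ∘ y = (a·x)·(a·y) for x, y ∈ Q. Then (Q, ∘) is a commutative loop with identity element a, and for all x, y ∈ Q: x ∘ x = a·x, (x ∘ x) ∘ (y ∘ y) = x·y, x ∘ (x ∘ x) = a, and, writing x² = x ∘ x and y² = y ∘ y, ((x² ∘ y²) ∘ (x² ∘ y²)) ∘ y² = x. -/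
/-- A Steiner quasigroup: a commutative binary operation satisfying
`x·x = x` and `x·(x·y) = y` for all `x`, `y`. -/
structure SteinerQuasigroupStruct (Q : Type) where
  mul : Q → Q → Q
  comm : ∀ x y, mul x y = mul y x
  idem : ∀ x, mul x x = x
  cancel : ∀ x y, mul x (mul x y) = y

/-- Multiplication-preserving maps between Steiner quasigroups. -/
def IsSQHom {Q M : Type} (A : SteinerQuasigroupStruct Q) (B : SteinerQuasigroupStruct M)
    (h : Q → M) : Prop :=
  ∀ a b, h (A.mul a b) = B.mul (h a) (h b)

/-- `(Q, ι)` is a free Steiner quasigroup on `X`. -/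
def IsFreeSteinerQuasigroup {X Q : Type} (A : SteinerQuasigroupStruct Q) (ι : X → Q) : Prop :=
  ∀ (M : Type) (B : SteinerQuasigroupStruct M) (f : X → M),
    ∃! h : Q → M, IsSQHom A B h ∧ h ∘ ι = f

open Classical in
/-- The multiplication of the exterior Steiner loop on `Option Q`:
`e = none` is the adjoined identity, `x·x = e`, and distinct elements of `Q`
multiply as in the quasigroup. -/
noncomputable def extMul {Q : Type} (M : SteinerQuasigroupStruct Q) :
    Option Q → Option Q → Option Q
  | none, z => z
  | some x, none => some x
  | some x, some y => if x = y then none else some (M.mul x y)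

/-- For a Steiner quasigroup `Q`, `a ∈ Q`, and
`x ∘ y := (a·x)·(a·y)`, the operation `∘` is a commutative loop with identity
`a`, and satisfies `x ∘ x = a·x`, `(x ∘ x) ∘ (y ∘ y) = x·y`, `x ∘ (x ∘ x) = a`,
and `((x² ∘ y²) ∘ (x² ∘ y²)) ∘ y² = x` where `x² = x ∘ x`, `y² = y ∘ y`. -/
theorem interior_steiner_loop_identities {Q : Type} (M : SteinerQuasigroupStruct Q)
    (a : Q) (imul : Q → Q → Q)
    (himul : ∀ x y, imul x y = M.mul (M.mul a x) (M.mul a y)) :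
    (∀ x y, imul x y = imul y x) ∧
    (∀ x, imul a x = x) ∧
    (∀ u b, ∃! y, imul u y = b) ∧
    (∀ x, imul x x = M.mul a x) ∧
    (∀ x y, imul (imul x x) (imul y y) = M.mul x y) ∧
    (∀ x, imul x (imul x x) = a) ∧
    (∀ x y,
      imul (imul (imul (imul x x) (imul y y)) (imul (imul x x) (imul y y)))
        (imul y y) = x) := by
  have hsq : ∀ x, imul x x = M.mul a x := fun x => by rw [himul, M.idem]
  have hprod : ∀ x y, imul (imul x x) (imul y y) = M.mul x y := fun x y => by
    rw [hsq, hsq, himul, M.cancel, M.cancel]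
  refine ⟨fun x y => ?_, fun x => ?_, fun u b => ?_, hsq, hprod, fun x => ?_, fun x y => ?_⟩
  · rw [himul, himul, M.comm]
  · rw [himul, M.idem, M.cancel]
  -- Left multiplications are involutions, so `(a·u)·(a·y) = b` forces `y = a·((a·u)·b)`.
  · refine ⟨M.mul a (M.mul (M.mul a u) b), ?_, fun y hy => ?_⟩
    · show imul u _ = b
      rw [himul, M.cancel, M.cancel]
    · rw [← hy, himul, M.cancel, M.cancel]
  · rw [hsq, himul, M.cancel, M.comm, M.comm a x, M.cancel]
  -- The left side reduces to `(x·y)·y`.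
  · rw [hprod, hsq, hsq, himul, M.cancel, M.cancel, M.comm, M.comm x y, M.cancel]
end
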